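/- arXiv:1703.04243 — 8 statements merged into one kernel-verified Lean document; each statement's English description precedes it below -/
import Mathlib

section
/- Let α = β ≥ −1/2, let ρ ≥ 1 and let n ≥ 1 be an integer. Then for every z on the Bernstein ellipse E_ρ, |P_n^{(α,α)}(z)| ≤ |P_n^{(α,α)}((ρ + ρ⁻¹)/2)| = |P_n^{(α,α)}(−(ρ + ρ⁻¹)/2)|, i.e. the maximum of |P_n^{(α,α)}| over E_ρ is attained at the two endpoints ±(ρ + ρ⁻¹)/2 of the major axis. Moreover, if α = β > −1/2, then equality holds only at these two points. -/
open Finset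

/-- Pochhammer symbol `(a)_j = a (a+1) ⋯ (a+j-1)`. -/
noncomputable def poch (a : ℝ) (j : ℕ) : ℝ := ∏ i ∈ Finset.range j, (a + i)

/-- Generalized binomial coefficient `binom(a, m) = a (a-1) ⋯ (a-m+1) / m!`. -/
noncomputable def gbinom (a : ℝ) (m : ℕ) : ℝ :=
  (∏ i ∈ Finset.range m, (a - i)) / (Nat.factorial m)

/-- Jacobi polynomial `P_n^{(α,β)}(x)` of a real variable. -/
noncomputable def jacobiP (α β : ℝ) (n : ℕ) (x : ℝ) : ℝ :=
  (1 / 2 ^ n) * ∑ k ∈ Finset.range (n + 1),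
    gbinom ((n : ℝ) + α) (n - k) * gbinom ((n : ℝ) + β) k * (x - 1) ^ k * (x + 1) ^ (n - k)

/-- Jacobi polynomial `P_n^{(α,β)}(z)` of a complex variable. -/
noncomputable def jacobiC (α β : ℝ) (n : ℕ) (z : ℂ) : ℂ :=
  (1 / 2 ^ n) * ∑ k ∈ Finset.range (n + 1),
    ((gbinom ((n : ℝ) + α) (n - k) * gbinom ((n : ℝ) + β) k : ℝ) : ℂ) *
      (z - 1) ^ k * (z + 1) ^ (n - k)

/-- Chebyshev-connection coefficients `d_{k,n}`, given by a terminating ₃F₂ sum. -/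
noncomputable def dCoeff (α β : ℝ) (n k : ℕ) : ℝ :=
  (poch ((n : ℝ) + α + β + 1) k * poch ((k : ℝ) + α + 1) (n - k)) /
      ((Nat.factorial (n - k)) * 2 ^ (2 * k) * (Nat.factorial k)) *
    ∑ j ∈ Finset.range (n - k + 1),
      (poch ((k : ℝ) - n) j * poch ((n : ℝ) + k + α + β + 1) j * poch ((k : ℝ) + 1 / 2) j) /
        (poch ((k : ℝ) + α + 1) j * poch (2 * (k : ℝ) + 1) j * (Nat.factorial j))

/-- The Bernstein ellipse `E_ρ`: the set of points `z = (u + u⁻¹)/2` with `|u| = ρ`. -/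
def bernsteinEllipse (ρ : ℝ) : Set ℂ :=
  {z : ℂ | ∃ u : ℂ, ‖u‖ = ρ ∧ z = (u + u⁻¹) / 2}


open Polynomial in
/-- The basis polynomial `(X-1)^(2k) (X+1)^(2m)`. -/
noncomputable def jT (k m : ℕ) : ℝ[X] := (X - C 1) ^ (2 * k) * (X + C 1) ^ (2 * m)

open Polynomial in
/-- flux polynomial: `k (k+α) (X-1)^(2k-2) (X+1)^(2m)` times `4 X (X^2-1)`. -/
noncomputable def jF (α : ℝ) (k m : ℕ) : ℝ[X] :=
  4 * X * (X ^ 2 - 1) * (C ((k : ℝ) * (k + α)) * ((X - C 1) ^ (2 * (k - 1)) * (X + C 1) ^ (2 * m)))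

open Polynomial in
/-- second flux polynomial. -/
noncomputable def jG (α : ℝ) (k m : ℕ) : ℝ[X] :=
  4 * X * (X ^ 2 - 1) * (C ((m : ℝ) * (m + α)) * ((X - C 1) ^ (2 * k) * (X + C 1) ^ (2 * (m - 1))))

open Polynomial in
/-- Euler operator `X d/dX`. -/
noncomputable def jth (p : ℝ[X]) : ℝ[X] := X * derivative p

open Polynomial in
/-- The differential operator. -/
noncomputable def jL (α : ℝ) (n : ℕ) (p : ℝ[X]) : ℝ[X] :=
  (X ^ 2 - 1) * (jth (jth p) - 2 * (n : ℝ[X]) * jth p) + C (2 * α + 1) * (X ^ 2 + 1) * jth p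
    - C ((2 * α + 1) * 2 * n) * (X ^ 2 * p)

open Polynomial in
lemma jL_T (α : ℝ) (k m : ℕ) : jL α (k + m) (jT k m) = jF α k m - jG α k m := by
  have hC : (C 2 : ℝ[X]) = 2 := rfl
  unfold jL jT jF jG jth
  rcases k with _ | k <;> rcases m with _ | m
  · simp
  · have h : 2 * (m + 1) - 1 = 2 * m + 1 := by omega
    simp [derivative_pow, hC, h]
    ring
  · have h : 2 * (k + 1) - 1 = 2 * k + 1 := by omega
    simp [derivative_pow, hC, h]
    ring
  · have h : 2 * (m + 1) - 1 = 2 * m + 1 := by omega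
    have h' : 2 * (k + 1) - 1 = 2 * k + 1 := by omega
    simp [derivative_pow, hC, h, h']
    ring

/-- weights -/
noncomputable def jw (α : ℝ) (n k : ℕ) : ℝ := gbinom ((n : ℝ) + α) (n - k) * gbinom ((n : ℝ) + α) k

open Polynomial in
/-- The polynomial `Q`. -/
noncomputable def jQ (α : ℝ) (n : ℕ) : ℝ[X] :=
  ∑ k ∈ Finset.range (n + 1), C (jw α n k) * jT k (n - k)

lemma gbinom_succ (a : ℝ) (k : ℕ) : (k + 1) * gbinom a (k + 1) = (a - k) * gbinom a k := by
  unfold gbinom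
  rw [Finset.prod_range_succ, Nat.factorial_succ]
  push_cast
  have := Nat.factorial_ne_zero k
  field_simp

lemma gbinom_pos (α : ℝ) (hα : -1/2 ≤ α) (n k : ℕ) (h : k ≤ n) : 0 < gbinom ((n : ℝ) + α) k := by
  unfold gbinom
  apply div_pos _ (by positivity)
  apply Finset.prod_pos
  intro i hi
  have : i + 1 ≤ n := by have := Finset.mem_range.1 hi; omega
  have : (i : ℝ) + 1 ≤ n := by exact_mod_cast this
  linarith

lemma jw_pos (α : ℝ) (hα : -1/2 ≤ α) (n k : ℕ) (h : k ≤ n) : 0 < jw α n k :=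
  mul_pos (gbinom_pos α hα n _ (by omega)) (gbinom_pos α hα n k h)

lemma jw_succ (α : ℝ) (k m : ℕ) :
    jw α (k + (m + 1)) (k + 1) * (((k + 1 : ℕ) : ℝ) * ((k + 1 : ℕ) + α)) =
      jw α (k + (m + 1)) k * (((m + 1 : ℕ) : ℝ) * ((m + 1 : ℕ) + α)) := by
  unfold jw
  rw [show k + (m + 1) - (k + 1) = m by omega, show k + (m + 1) - k = m + 1 by omega]
  have h1 := gbinom_succ (((k + (m + 1) : ℕ) : ℝ) + α) k
  have h2 := gbinom_succ (((k + (m + 1) : ℕ) : ℝ) + α) m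
  generalize gbinom (((k + (m + 1) : ℕ) : ℝ) + α) (k+1) = a at *
  generalize gbinom (((k + (m + 1) : ℕ) : ℝ) + α) (k) = b at *
  generalize gbinom (((k + (m + 1) : ℕ) : ℝ) + α) (m+1) = c at *
  generalize gbinom (((k + (m + 1) : ℕ) : ℝ) + α) (m) = d at *
  push_cast at *
  linear_combination (d * (k + 1 + α)) * h1 - (b * (m + 1 + α)) * h2

open Polynomial in
lemma jL_add (α : ℝ) (n : ℕ) (p q : ℝ[X]) : jL α n (p + q) = jL α n p + jL α n q := by
  unfold jL jth; simp only [derivative_add, mul_add, derivative_mul]; ring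

open Polynomial in
lemma jL_C (α : ℝ) (n : ℕ) (c : ℝ) (p : ℝ[X]) : jL α n (C c * p) = C c * jL α n p := by
  unfold jL jth; simp only [derivative_add, mul_add, derivative_mul, derivative_C, zero_mul, zero_add]; ring

open Polynomial in
lemma jL_sum (α : ℝ) (n : ℕ) (s : Finset ℕ) (f : ℕ → ℝ[X]) :
    jL α n (∑ k ∈ s, f k) = ∑ k ∈ s, jL α n (f k) := by
  classical
  induction s using Finset.induction_on with
  | empty => simp [jL, jth]
  | insert a s ha ih => rw [Finset.sum_insert ha, Finset.sum_insert ha, jL_add, ih]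

open Polynomial in
lemma jL_Q (α : ℝ) (n : ℕ) : jL α n (jQ α n) = 0 := by
  unfold jQ
  rw [jL_sum]
  have key : ∀ N ≤ n, ∑ k ∈ Finset.range N, jL α n (C (jw α n k) * jT k (n - k)) =
      - (C (jw α n N) * jF α N (n - N)) := by
    intro N
    induction N with
    | zero => intro _; simp [jF]
    | succ N ih =>
      intro hN
      rw [Finset.sum_range_succ, ih (by omega), jL_C]
      obtain ⟨m, rfl⟩ : ∃ m, n = N + (m + 1) := ⟨n - N - 1, by omega⟩
      rw [show N + (m + 1) - N = m + 1 by omega, show N + (m + 1) - (N + 1) = m by omega, jL_T]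
      have h := congrArg (C : ℝ → ℝ[X]) (jw_succ α N m)
      rw [C_mul, C_mul (a := jw α (N + (m + 1)) N)] at h
      unfold jF jG
      simp only [Nat.add_sub_cancel]
      linear_combination (4 * X * (X ^ 2 - 1) * ((X - C 1) ^ (2 * N) * (X + C 1) ^ (2 * m))) * h
  rw [Finset.sum_range_succ, key n le_rfl, jL_C]
  have := jL_T α n 0
  simp only [Nat.add_zero] at this
  rw [Nat.sub_self, this]
  simp [jG]

open Polynomial in
lemma jth_coeff (p : ℝ[X]) (j : ℕ) : (jth p).coeff j = j * p.coeff j := by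
  unfold jth
  rcases j with _ | j
  · simp
  · rw [coeff_X_mul, coeff_derivative]; push_cast; ring

open Polynomial in
lemma jL_coeff (α : ℝ) (n : ℕ) (p : ℝ[X]) (j : ℕ) (h : jL α n p = 0) :
    ((j : ℝ) + (2 * α + 1)) * (2 * n - j) * p.coeff j =
      (j + 2) * (2 * n + (2 * α + 1) - (j + 2)) * p.coeff (j + 2) := by
  have e : jL α n p = X ^ 2 * (jth (jth p) - C (2 * (n : ℝ)) * jth p + C (2 * α + 1) * jth p
      - C ((2 * α + 1) * 2 * n) * p)
     - (jth (jth p) - C (2 * (n : ℝ)) * jth p - C (2 * α + 1) * jth p) := by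
    have hC : (C 2 : ℝ[X]) = 2 := rfl
    unfold jL; simp [hC]; ring
  have := congrArg (fun q => coeff q (j + 2)) (e.symm.trans h)
  simp only [coeff_sub, coeff_add, coeff_X_pow_mul, coeff_C_mul, jth_coeff, coeff_zero] at this
  push_cast at this
  linear_combination -this

open Polynomial in
lemma jL_coeff_one (α : ℝ) (n : ℕ) (p : ℝ[X]) (h : jL α n p = 0) :
    (2 * n + (2 * α + 1) - 1) * p.coeff 1 = 0 := by
  have e : jL α n p = X ^ 2 * (jth (jth p) - C (2 * (n : ℝ)) * jth p + C (2 * α + 1) * jth p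
      - C ((2 * α + 1) * 2 * n) * p)
     - (jth (jth p) - C (2 * (n : ℝ)) * jth p - C (2 * α + 1) * jth p) := by
    have hC : (C 2 : ℝ[X]) = 2 := rfl
    unfold jL; simp [hC]; ring
  have := congrArg (fun q => coeff q 1) (e.symm.trans h)
  simp only [coeff_sub, coeff_add, coeff_X_pow_mul', coeff_C_mul, jth_coeff, coeff_zero] at this
  norm_num at this
  linear_combination this

open Polynomial in
lemma jT_monic (k m : ℕ) : (jT k m).Monic :=
  ((monic_X_sub_C 1).pow _).mul ((monic_X_add_C 1).pow _)

open Polynomial in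
lemma jT_natDegree (k m : ℕ) : (jT k m).natDegree = 2 * (k + m) := by
  unfold jT
  rw [Monic.natDegree_mul ((monic_X_sub_C 1).pow _) ((monic_X_add_C 1).pow _),
    (monic_X_sub_C (1:ℝ)).natDegree_pow, (monic_X_add_C (1:ℝ)).natDegree_pow,
    natDegree_X_sub_C, natDegree_X_add_C]
  ring

open Polynomial in
lemma jQ_natDegree (α : ℝ) (n : ℕ) : (jQ α n).natDegree < 2 * n + 1 := by
  apply Nat.lt_succ_of_le
  apply natDegree_sum_le_of_forall_le
  intro k hk
  have := Finset.mem_range.1 hk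
  refine (natDegree_C_mul_le _ _).trans ?_
  rw [jT_natDegree]; omega

open Polynomial in
lemma jQ_top (α : ℝ) (hα : -1/2 ≤ α) (n : ℕ) : 0 ≤ (jQ α n).coeff (2 * n) := by
  unfold jQ
  rw [finsetSum_coeff]
  apply Finset.sum_nonneg
  intro k hk
  have := Finset.mem_range.1 hk
  have h := jT_monic k (n - k)
  unfold Monic leadingCoeff at h
  rw [jT_natDegree, show k + (n - k) = n by omega] at h
  rw [coeff_C_mul, h, mul_one]
  exact (jw_pos α hα n k (by omega)).le

open Polynomial in
lemma jQ_zero (α : ℝ) (hα : -1/2 ≤ α) (n : ℕ) : 0 < (jQ α n).coeff 0 := by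
  unfold jQ
  rw [finsetSum_coeff]
  apply Finset.sum_pos _ ⟨0, by simp⟩
  intro k hk
  have := Finset.mem_range.1 hk
  rw [coeff_C_mul]
  have : (jT k (n - k)).coeff 0 = 1 := by
    rw [coeff_zero_eq_eval_zero]; simp [jT]
  rw [this, mul_one]
  exact jw_pos α hα n k (by omega)

lemma jQ_nonneg (α : ℝ) (hα : -1/2 ≤ α) (n : ℕ) (hn : 1 ≤ n) (j : ℕ) (hj : j ≤ 2 * n) :
    0 ≤ (jQ α n).coeff j := by
  induction j using Nat.strong_induction_on with
  | _ j ih =>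
    have hn' : (1 : ℝ) ≤ n := by exact_mod_cast hn
    match j, ih, hj with
    | 0, _, _ => exact (jQ_zero α hα n).le
    | 1, _, _ =>
      have := jL_coeff_one α n _ (jL_Q α n)
      rcases mul_eq_zero.1 this with h | h
      · linarith
      · exact h.ge
    | j + 2, ih, hj =>
      rcases hj.eq_or_lt with h | h
      · rw [h]; exact jQ_top α hα n
      · have h1 := ih j (by omega) (by omega)
        have h2 := jL_coeff α n _ j (jL_Q α n)
        have h3 : (j : ℝ) + 2 < 2 * n := by exact_mod_cast h
        have h4 : 0 ≤ ((j : ℝ) + (2 * α + 1)) * (2 * n - j) * (jQ α n).coeff j := by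
          have : 0 ≤ (j : ℝ) := j.cast_nonneg
          apply mul_nonneg (mul_nonneg _ _) h1 <;> linarith
        rw [h2] at h4
        refine nonneg_of_mul_nonneg_right h4 (mul_pos (by positivity) (by linarith))

lemma jQ_two (α : ℝ) (hα : -1/2 < α) (n : ℕ) (hn : 1 ≤ n) : 0 < (jQ α n).coeff 2 := by
  have hn' : (1 : ℝ) ≤ n := by exact_mod_cast hn
  have h2 := jL_coeff α n _ 0 (jL_Q α n)
  have h0 := jQ_zero α hα.le n
  have h4 : 0 < (((0:ℕ) : ℝ) + (2 * α + 1)) * (2 * n - ((0:ℕ):ℝ)) * (jQ α n).coeff 0 := by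
    push_cast
    apply mul_pos (mul_pos _ _) h0 <;> linarith
  rw [h2] at h4
  refine pos_of_mul_pos_right h4 (mul_nonneg (by positivity) ?_)
  push_cast; linarith

open Polynomial in
lemma jacobiC_eq (α : ℝ) (n : ℕ) (u : ℂ) (hu : u ≠ 0) :
    jacobiC α α n ((u + u⁻¹) / 2) * (4 * u) ^ n = aeval u (jQ α n) := by
  unfold jacobiC jQ
  rw [map_sum, mul_assoc, Finset.sum_mul, Finset.mul_sum]
  apply Finset.sum_congr rfl
  intro k hk
  obtain ⟨m, rfl⟩ : ∃ m, n = k + m := ⟨n - k, by have := Finset.mem_range.1 hk; omega⟩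
  have h1 : (u + u⁻¹) / 2 - 1 = (u - 1) ^ 2 / (2 * u) := by field_simp; ring
  have h2 : (u + u⁻¹) / 2 + 1 = (u + 1) ^ 2 / (2 * u) := by field_simp; ring
  rw [h1, h2]
  simp only [jT, jw, map_mul, map_pow, map_sub, map_add, aeval_X, aeval_C, Complex.coe_algebraMap,
    Nat.add_sub_cancel_left]
  push_cast
  rw [show (4 * u) = 2 * (2 * u) by ring, mul_pow 2 (2 * u), div_pow, div_pow, pow_mul, pow_mul]
  have : (2 * u) ^ (k + m) = (2 * u) ^ k * (2 * u) ^ m := pow_add _ _ _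
  rw [this]
  have : (2 * u) ≠ 0 := by simpa using hu
  field_simp

lemma jacobiC_ofReal (α : ℝ) (n : ℕ) (x : ℝ) : jacobiC α α n (x : ℂ) = (jacobiP α α n x : ℝ) := by
  unfold jacobiC jacobiP; push_cast; rfl

lemma jacobiP_neg (α : ℝ) (n : ℕ) (x : ℝ) :
    jacobiP α α n (-x) = (-1) ^ n * jacobiP α α n x := by
  unfold jacobiP
  rw [mul_left_comm, ← Finset.sum_range_reflect]
  congr 1
  rw [Finset.mul_sum]
  apply Finset.sum_congr rfl
  intro k hk
  obtain ⟨m, rfl⟩ : ∃ m, n = k + m := ⟨n - k, by have := Finset.mem_range.1 hk; omega⟩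
  rw [show k + m + 1 - 1 - k = m by omega, show k + m - m = k by omega,
    show k + m - k = m by omega, show -x - 1 = -1 * (x + 1) by ring,
    show -x + 1 = -1 * (x - 1) by ring, mul_pow, mul_pow, pow_add]
  ring

lemma jnorm_eq (α : ℝ) (n : ℕ) (u : ℂ) (hu : u ≠ 0) :
    ‖jacobiC α α n ((u + u⁻¹) / 2)‖ * (4 * ‖u‖) ^ n =
      ‖∑ j ∈ Finset.range (2 * n + 1), ((jQ α n).coeff j : ℂ) * u ^ j‖ := by
  have h := congrArg norm (jacobiC_eq α n u hu)
  rw [Polynomial.aeval_eq_sum_range' (jQ_natDegree α n)] at h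
  simpa [Complex.real_smul] using h

lemma jeq_case (a b : ℝ) (ha : 0 < a) (hb : 0 < b) (w : ℂ) (h : a + b * ‖w‖ ≤ ‖(a : ℂ) + b * w‖) :
    w = (‖w‖ : ℝ) := by
  have h0 : 0 ≤ ‖w‖ := norm_nonneg w
  have h1 : (a + b * ‖w‖) ^ 2 ≤ ‖(a : ℂ) + b * w‖ ^ 2 := by gcongr
  have h2 : ‖w‖ ^ 2 = w.re ^ 2 + w.im ^ 2 := by rw [Complex.sq_norm, Complex.normSq_apply]; ring
  rw [Complex.sq_norm, Complex.normSq_apply] at h1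
  simp at h1
  have h3 : ‖w‖ ≤ w.re := by
    have : a * b * ‖w‖ ≤ a * b * w.re := by
      have h7 : b ^ 2 * ‖w‖ ^ 2 = b ^ 2 * (w.re ^ 2 + w.im ^ 2) := by rw [h2]
      linarith
    exact le_of_mul_le_mul_left this (mul_pos ha hb)
  have h4 := Complex.re_le_norm w
  have h5 : w.re = ‖w‖ := le_antisymm h4 h3
  have h6 : w.im = 0 := by
    have : w.im ^ 2 = 0 := by rw [← h5] at h2; linarith
    exact pow_eq_zero_iff (two_ne_zero) |>.1 this
  apply Complex.ext <;> simp [h5, h6]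

/-- if `α = β ≥ -1/2`, the maximum of `|P_n^{(α,α)}|` over the Bernstein ellipse
`E_ρ` is attained at the two endpoints `±(ρ + ρ⁻¹)/2` of the major axis; moreover, if
`α > -1/2`, the maximum is attained only at these two points. -/
theorem jacobi_max_gegenbauer
    (α : ℝ) (hα : -1/2 ≤ α) (ρ : ℝ) (hρ : 1 ≤ ρ) (n : ℕ) (hn : 1 ≤ n) :
    (∀ z ∈ bernsteinEllipse ρ,
      ‖jacobiC α α n z‖ ≤ |jacobiP α α n ((ρ + ρ⁻¹) / 2)|) ∧
    |jacobiP α α n ((ρ + ρ⁻¹) / 2)| = |jacobiP α α n (-((ρ + ρ⁻¹) / 2))| ∧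
    (-1/2 < α → ∀ z ∈ bernsteinEllipse ρ,
      ‖jacobiC α α n z‖ = |jacobiP α α n ((ρ + ρ⁻¹) / 2)| →
        z = (((ρ + ρ⁻¹) / 2 : ℝ) : ℂ) ∨ z = -(((ρ + ρ⁻¹) / 2 : ℝ) : ℂ)) := by
  have hρ0 : 0 < ρ := by linarith
  have hP : |jacobiP α α n ((ρ + ρ⁻¹) / 2)| * (4 * ρ) ^ n =
      ∑ j ∈ Finset.range (2 * n + 1), (jQ α n).coeff j * ρ ^ j := by
    have h := jnorm_eq α n (ρ : ℂ) (by exact_mod_cast hρ0.ne')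
    have e : ((ρ : ℂ) + (ρ : ℂ)⁻¹) / 2 = (((ρ + ρ⁻¹) / 2 : ℝ) : ℂ) := by push_cast; rfl
    have e2 : ∑ j ∈ Finset.range (2 * n + 1), ((jQ α n).coeff j : ℂ) * (ρ : ℂ) ^ j =
      ((∑ j ∈ Finset.range (2 * n + 1), (jQ α n).coeff j * ρ ^ j : ℝ) : ℂ) := by push_cast; rfl
    rw [e, e2, jacobiC_ofReal, Complex.norm_real, Complex.norm_real, Complex.norm_real,
      Real.norm_eq_abs, Real.norm_eq_abs, Real.norm_eq_abs, abs_of_pos hρ0] at h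
    rw [h, abs_of_nonneg]
    apply Finset.sum_nonneg
    intro j hj
    have := Finset.mem_range.1 hj
    exact mul_nonneg (jQ_nonneg α hα n hn j (by omega)) (by positivity)
  have hterm : ∀ u : ℂ, ‖u‖ = ρ → ∀ j ∈ Finset.range (2 * n + 1),
      ‖((jQ α n).coeff j : ℂ) * u ^ j‖ = (jQ α n).coeff j * ρ ^ j := by
    intro u hu j hj
    have := Finset.mem_range.1 hj
    rw [norm_mul, norm_pow, hu, Complex.norm_real, Real.norm_eq_abs,
      abs_of_nonneg (jQ_nonneg α hα n hn j (by omega))]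
  refine ⟨?_, ?_, ?_⟩
  · rintro z ⟨u, hu, rfl⟩
    have hu0 : u ≠ 0 := by rw [← norm_pos_iff, hu]; exact hρ0
    have h := jnorm_eq α n u hu0
    rw [hu] at h
    have : ‖jacobiC α α n ((u + u⁻¹) / 2)‖ * (4 * ρ) ^ n ≤
        |jacobiP α α n ((ρ + ρ⁻¹) / 2)| * (4 * ρ) ^ n := by
      rw [h, hP, ← Finset.sum_congr rfl (hterm u hu)]
      exact norm_sum_le _ _
    exact le_of_mul_le_mul_right this (by positivity)
  · rw [jacobiP_neg, abs_mul]; simp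
  · rintro hα' z ⟨u, hu, rfl⟩ heq
    have hu0 : u ≠ 0 := by rw [← norm_pos_iff, hu]; exact hρ0
    have h := jnorm_eq α n u hu0
    rw [hu, heq, hP] at h
    have hs : ({0, 2} : Finset ℕ) ⊆ Finset.range (2 * n + 1) := by
      intro x hx; simp at hx; simp; omega
    rw [← Finset.sum_sdiff hs, ← Finset.sum_sdiff hs] at h
    have h1 : ‖∑ j ∈ Finset.range (2 * n + 1) \ {0, 2}, ((jQ α n).coeff j : ℂ) * u ^ j‖ ≤
        ∑ j ∈ Finset.range (2 * n + 1) \ {0, 2}, (jQ α n).coeff j * ρ ^ j := by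
      rw [← Finset.sum_congr rfl fun j hj => hterm u hu j (Finset.mem_sdiff.1 hj).1]
      exact norm_sum_le _ _
    have h2 := norm_add_le (∑ j ∈ Finset.range (2 * n + 1) \ {0, 2}, ((jQ α n).coeff j : ℂ) * u ^ j)
      (∑ j ∈ {0, 2}, ((jQ α n).coeff j : ℂ) * u ^ j)
    rw [← h] at h2
    have h3 := h2.trans (add_le_add_left h1 _)
    rw [Finset.sum_pair (by norm_num), Finset.sum_pair (by norm_num)] at h3
    simp only [pow_zero, mul_one] at h3
    have h4 : (jQ α n).coeff 0 + (jQ α n).coeff 2 * ‖u ^ 2‖ ≤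
        ‖((jQ α n).coeff 0 : ℂ) + (jQ α n).coeff 2 * u ^ 2‖ := by
      rw [norm_pow, hu]; linarith
    have h5 := jeq_case _ _ (jQ_zero α hα n) (jQ_two α hα' n hn) _ h4
    rw [norm_pow, hu] at h5
    push_cast at h5
    rcases sq_eq_sq_iff_eq_or_eq_neg.1 h5 with h6 | h6
    · left; rw [h6]; push_cast; rfl
    · right; rw [h6]; push_cast; rw [inv_neg]; ring
end

section
/- Let n ≥ 1 be an integer and ρ > 1. Then min_{z ∈ E_ρ} |T_n(z)| = (ρ^n − ρ^{−n})/2, and the minimum is attained exactly at the 2n points z = (ρ e^{i(2k+1)π/(2n)} + ρ⁻¹ e^{−i(2k+1)π/(2n)})/2, k = 0, 1, …, 2n−1; that is, for every z ∈ E_ρ one has |T_n(z)| ≥ (ρ^n − ρ^{−n})/2, with equality exactly at these points. -/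
theorem cheb_aux (n : ℕ) (ρ : ℝ) (hρ : 1 < ρ) (θ : ℝ) :
    ‖(Polynomial.Chebyshev.T ℂ (n : ℤ)).eval
      (((ρ : ℂ) * Complex.exp ((θ : ℝ) * Complex.I) +
        ((ρ : ℂ) * Complex.exp ((θ : ℝ) * Complex.I))⁻¹) / 2)‖ ^ 2 =
      ((ρ ^ n - ρ⁻¹ ^ n) / 2) ^ 2 + Real.cos (n * θ) ^ 2 := by
  have h0 : 0 < ρ := by linarith
  have hu : (ρ : ℂ) * Complex.exp ((θ : ℝ) * Complex.I) =
      Complex.exp ((Real.log ρ : ℝ) + θ * Complex.I) := by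
    rw [Complex.exp_add, ← Complex.ofReal_exp, Real.exp_log h0]
  have hz : (((ρ : ℂ) * Complex.exp ((θ : ℝ) * Complex.I) +
        ((ρ : ℂ) * Complex.exp ((θ : ℝ) * Complex.I))⁻¹) / 2) =
      Complex.cosh ((Real.log ρ : ℝ) + θ * Complex.I) := by
    rw [hu, Complex.cosh, Complex.exp_neg]
  have hR : Real.exp (n * Real.log ρ) = ρ ^ n := by
    rw [Real.exp_nat_mul, Real.exp_log h0]
  have hc : Complex.cosh (((n : ℤ) : ℂ) * ((Real.log ρ : ℝ) + θ * Complex.I)) =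
      ((Real.cosh (n * Real.log ρ) * Real.cos (n * θ) : ℝ) : ℂ) +
      ((Real.sinh (n * Real.log ρ) * Real.sin (n * θ) : ℝ) : ℂ) * Complex.I := by
    rw [mul_add, ← mul_assoc, Complex.cosh_add, Complex.cosh_mul_I, Complex.sinh_mul_I]
    push_cast
    ring
  rw [hz, Polynomial.Chebyshev.T_complex_cosh, hc, Complex.sq_norm, Complex.normSq_add_mul_I,
    inv_pow, ← hR, ← Real.exp_neg, ← Real.sinh_eq]
  have h1 := Real.cosh_sq (n * Real.log ρ)
  have h2 := Real.sin_sq_add_cos_sq (n * θ)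
  rw [mul_pow, mul_pow, h1]
  linear_combination (Real.sinh (n * Real.log ρ)) ^ 2 * h2

theorem cheb_aux_eq (n : ℕ) (ρ : ℝ) (hρ : 1 < ρ) (θ : ℝ) (t : ℝ) (ht : 0 ≤ t)
    (h : t ^ 2 = ((ρ ^ n - ρ⁻¹ ^ n) / 2) ^ 2 + Real.cos (n * θ) ^ 2) :
    (ρ ^ n - ρ⁻¹ ^ n) / 2 ≤ t ∧ (t = (ρ ^ n - ρ⁻¹ ^ n) / 2 ↔ Real.cos (n * θ) = 0) := by
  have h1 : ρ⁻¹ ^ n ≤ 1 := pow_le_one₀ (by positivity) (inv_le_one_of_one_le₀ hρ.le)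
  have h2 : 1 ≤ ρ ^ n := one_le_pow₀ hρ.le
  have h3 : 0 ≤ (ρ ^ n - ρ⁻¹ ^ n) / 2 := by linarith
  refine ⟨abs_le_of_sq_le_sq' (by nlinarith [sq_nonneg (Real.cos (n * θ))]) ht |>.2, ?_, ?_⟩
  · intro e
    rw [e] at h
    exact pow_eq_zero_iff two_ne_zero |>.1 (by linarith)
  · intro e
    rw [e] at h
    exact (sq_eq_sq₀ ht h3).1 (by linarith)

/-- for `ρ > 1`, `min_{z ∈ E_ρ} |T_n(z)| = (ρ^n - ρ^{-n})/2`, attained exactly at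
the `2n` points `z = (ρ e^{i(2k+1)π/(2n)} + ρ⁻¹ e^{-i(2k+1)π/(2n)})/2`, `k = 0, …, 2n-1`. -/
theorem chebyshevT_min
    (n : ℕ) (hn : 1 ≤ n) (ρ : ℝ) (hρ : 1 < ρ) :
    ∀ z ∈ bernsteinEllipse ρ,
      (ρ ^ n - ρ⁻¹ ^ n) / 2 ≤ ‖(Polynomial.Chebyshev.T ℂ (n : ℤ)).eval z‖ ∧
      (‖(Polynomial.Chebyshev.T ℂ (n : ℤ)).eval z‖ = (ρ ^ n - ρ⁻¹ ^ n) / 2 ↔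
        ∃ k : ℕ, k < 2 * n ∧
          z = ((ρ : ℂ) * Complex.exp (((2 * k + 1) * Real.pi / (2 * n) : ℝ) * Complex.I) +
              ((ρ : ℂ) * Complex.exp (((2 * k + 1) * Real.pi / (2 * n) : ℝ) * Complex.I))⁻¹)
            / 2) := by
  rintro z ⟨u, hu, rfl⟩
  have hn0 : (n : ℝ) ≠ 0 := by positivity
  have hue : u = (ρ : ℂ) * Complex.exp ((u.arg : ℝ) * Complex.I) := by
    rw [← hu, Complex.norm_mul_exp_arg_mul_I]
  have key := cheb_aux_eq n ρ hρ u.arg _ (norm_nonneg _) (cheb_aux n ρ hρ u.arg)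
  rw [← hue] at key
  refine ⟨key.1, ?_⟩
  constructor
  · intro h
    obtain ⟨m, hm⟩ := Real.cos_eq_zero_iff.1 (key.2.1 h)
    have hpos : (0 : ℤ) < 2 * n := by omega
    obtain ⟨k, hk⟩ := Int.eq_ofNat_of_zero_le (Int.emod_nonneg m hpos.ne')
    have hlt := Int.emod_lt_of_pos m hpos
    refine ⟨k, by omega, ?_⟩
    have hdiv := Int.emod_add_mul_ediv m (2 * n)
    rw [hk] at hdiv
    have hdR : (m : ℝ) = k + 2 * n * ((m / (2 * n) : ℤ) : ℝ) := by exact_mod_cast hdiv.symm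
    set q : ℤ := m / (2 * n)
    have harg : u.arg = (2 * k + 1) * Real.pi / (2 * n) + q * (2 * Real.pi) := by
      rw [hdR] at hm
      field_simp
      linear_combination 2 * hm
    have : u = (ρ : ℂ) * Complex.exp (((2 * k + 1) * Real.pi / (2 * n) : ℝ) * Complex.I) := by
      rw [hue, harg]
      congr 1
      rw [Complex.exp_eq_exp_iff_exists_int]
      refine ⟨q, ?_⟩
      push_cast
      ring
    rw [← this]
  · rintro ⟨k, -, hk⟩
    rw [hk]
    refine (cheb_aux_eq n ρ hρ ((2 * k + 1) * Real.pi / (2 * n)) _ (norm_nonneg _)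
      (cheb_aux n ρ hρ _)).2.2 ?_
    rw [Real.cos_eq_zero_iff]
    refine ⟨k, ?_⟩
    push_cast
    field_simp
end

section
/- Let n ≥ 0 be an integer, ρ > 1, and z = (ρ e^{iθ} + ρ⁻¹ e^{−iθ})/2 a point of the Bernstein ellipse E_ρ. Then |U_n(z)|² = (a_{2n+2}(ρ) − cos((2n+2)θ)) / (a_2(ρ) − cos(2θ)), where a_k(ρ) = (ρ^k + ρ^{−k})/2. -/
/-- `a_k(ρ) = (ρ^k + ρ^{-k})/2`. -/
noncomputable def aCoef (k : ℕ) (ρ : ℝ) : ℝ := (ρ ^ k + ρ⁻¹ ^ k) / 2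

theorem U_mul_aux (u v z : ℂ) (huv : u * v = 1) (hz : z = (u + v) / 2) (n : ℕ) :
    (Polynomial.Chebyshev.U ℂ (n : ℤ)).eval z * (u - v) = u ^ (n + 1) - v ^ (n + 1) := by
  induction n using Nat.twoStepInduction with
  | zero => simp
  | one => simp [hz]; ring
  | more n ih1 ih2 =>
    push_cast at *
    rw [Polynomial.Chebyshev.U_add_two]
    simp only [Polynomial.eval_sub, Polynomial.eval_mul, Polynomial.eval_X,
      Polynomial.eval_ofNat]
    have h2z : 2 * z = u + v := by rw [hz]; ring
    rw [h2z]
    linear_combination (u + v) * ih2 - ih1 + (u ^ (n + 1) - v ^ (n + 1)) * huv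

theorem norm_aux (r s φ : ℝ) (h : r * s = 1) :
    ‖(r : ℂ) * Complex.exp (φ * Complex.I) - (s : ℂ) * Complex.exp (-(φ * Complex.I))‖ ^ 2 =
      r ^ 2 + s ^ 2 - 2 * Real.cos (2 * φ) := by
  have e : (r : ℂ) * Complex.exp (φ * Complex.I) - (s : ℂ) * Complex.exp (-(φ * Complex.I)) =
      (((r - s) * Real.cos φ : ℝ) : ℂ) + (((r + s) * Real.sin φ : ℝ) : ℂ) * Complex.I := by
    rw [← neg_mul, Complex.exp_mul_I, Complex.exp_mul_I, Complex.cos_neg, Complex.sin_neg]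
    push_cast
    ring
  rw [e, ← Complex.normSq_eq_norm_sq, Complex.normSq_add_mul_I, Real.cos_two_mul]
  have := Real.sin_sq_add_cos_sq φ
  linear_combination (r + s) ^ 2 * this + (2 - 4 * Real.cos φ ^ 2) * h

/-- for `ρ > 1` and `z = (ρ e^{iθ} + ρ⁻¹ e^{-iθ})/2 ∈ E_ρ`,
`|U_n(z)|² = (a_{2n+2}(ρ) - cos((2n+2)θ)) / (a_2(ρ) - cos(2θ))`. -/
theorem chebyshevU_abs_sq
    (n : ℕ) (ρ : ℝ) (hρ : 1 < ρ) (θ : ℝ) (z : ℂ)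
    (hz : z = ((ρ : ℂ) * Complex.exp (θ * Complex.I) +
        (ρ : ℂ)⁻¹ * Complex.exp (-(θ * Complex.I))) / 2) :
    ‖(Polynomial.Chebyshev.U ℂ (n : ℤ)).eval z‖ ^ 2 =
      (aCoef (2 * n + 2) ρ - Real.cos ((2 * n + 2) * θ)) /
        (aCoef 2 ρ - Real.cos (2 * θ)) := by
  have hρ0 : ρ ≠ 0 := by positivity
  have hm : ρ * ρ⁻¹ = 1 := mul_inv_cancel₀ hρ0
  have huv : ((ρ : ℂ) * Complex.exp (θ * Complex.I)) *
      ((ρ : ℂ)⁻¹ * Complex.exp (-(θ * Complex.I))) = 1 := by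
    have : (ρ : ℂ) ≠ 0 := by exact_mod_cast hρ0
    rw [Complex.exp_neg]
    have := Complex.exp_ne_zero (θ * Complex.I)
    field_simp
  have key := congrArg (fun w => ‖w‖ ^ 2) (U_mul_aux _ _ z huv hz n)
  simp only [norm_mul, mul_pow] at key
  have h1 := norm_aux ρ ρ⁻¹ θ hm
  have h2 := norm_aux (ρ ^ (n + 1)) (ρ⁻¹ ^ (n + 1)) ((n + 1) * θ)
    (by rw [← mul_pow, hm, one_pow])
  have e1 : Complex.exp (θ * Complex.I) ^ (n + 1) =
      Complex.exp ((((n + 1) * θ : ℝ) : ℂ) * Complex.I) := by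
    rw [← Complex.exp_nat_mul]; push_cast; ring_nf
  have e2 : Complex.exp (-(θ * Complex.I)) ^ (n + 1) =
      Complex.exp (-((((n + 1) * θ : ℝ) : ℂ) * Complex.I)) := by
    rw [← Complex.exp_nat_mul]; push_cast; ring_nf
  rw [e1, e2] at key
  rw [Complex.ofReal_inv] at h1
  rw [Complex.ofReal_pow, Complex.ofReal_pow, Complex.ofReal_inv] at h2
  rw [h1, h2] at key
  have hpos : 0 < ρ - ρ⁻¹ := sub_pos.mpr ((inv_lt_one_of_one_lt₀ hρ).trans hρ)
  have hd : 0 < aCoef 2 ρ - Real.cos (2 * θ) := by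
    unfold aCoef
    have := Real.cos_le_one (2 * θ)
    nlinarith [mul_pos hpos hpos]
  rw [eq_div_iff hd.ne']
  unfold aCoef
  have e3 : (2 * ((n + 1) * θ) : ℝ) = (2 * n + 2) * θ := by ring
  rw [e3, ← pow_mul, ← pow_mul, show (n + 1) * 2 = 2 * n + 2 by ring] at key
  linear_combination key / 2
end

section
/- Let n ≥ 1 be an odd integer and ρ > 1. Then min_{z ∈ E_ρ} |U_n(z)| = (ρ^{n+1} − ρ^{−n−1})/(ρ + ρ⁻¹), and the minimum is attained if and only if z = ± i(ρ − ρ⁻¹)/2, i.e. exactly at the two endpoints of the minor axis of the Bernstein ellipse. -/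
theorem cheb_formula (u : ℂ) (hu : u ≠ 0) (n : ℕ) :
    (Polynomial.Chebyshev.U ℂ (n : ℤ)).eval ((u + u⁻¹) / 2) * (u - u⁻¹)
      = u ^ (n + 1) - u⁻¹ ^ (n + 1) := by
  have huu : u * u⁻¹ = 1 := mul_inv_cancel₀ hu
  induction n using Nat.twoStepInduction with
  | zero => simp
  | one =>
    simp
    ring
  | more n ih1 ih2 =>
    have h : (Polynomial.Chebyshev.U ℂ ((n + 2 : ℕ) : ℤ)) = 2 * Polynomial.X *
        Polynomial.Chebyshev.U ℂ ((n + 1 : ℕ) : ℤ) - Polynomial.Chebyshev.U ℂ (n : ℤ) := by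
      have := Polynomial.Chebyshev.U_add_two ℂ (n : ℤ)
      exact_mod_cast this
    rw [h]
    simp only [Polynomial.eval_sub, Polynomial.eval_mul, Polynomial.eval_X, Polynomial.eval_ofNat]
    generalize u⁻¹ = v at *
    linear_combination (u + v) * ih2 - ih1 + (u ^ (n + 1) - v ^ (n + 1)) * huu

theorem den_normSq (u : ℂ) (ρ : ℝ) (hρ : 1 < ρ) (hu : ‖u‖ = ρ) :
    ‖u - u⁻¹‖ ^ 2 = (ρ + ρ⁻¹) ^ 2 - 4 * u.re ^ 2 / ρ ^ 2 := by
  have h0 : ρ ≠ 0 := by positivity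
  have h1 : Complex.normSq u = ρ ^ 2 := by rw [Complex.normSq_eq_norm_sq, hu]
  have h2 : u.re * u.re + u.im * u.im = ρ ^ 2 := by rw [← h1, Complex.normSq_apply]
  have h3 : u.im ^ 2 = ρ ^ 2 - u.re ^ 2 := by linarith
  rw [← Complex.normSq_eq_norm_sq, Complex.normSq_apply]
  simp only [Complex.sub_re, Complex.sub_im, Complex.inv_re, Complex.inv_im, h1]
  field_simp
  ring_nf
  simp only [h3]
  ring

theorem value_at (n : ℕ) (hodd : Odd n) (ρ : ℝ) (hρ : 1 < ρ) (u : ℂ) (hu : u ^ 2 = -(ρ : ℂ) ^ 2)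
    (hnu : ‖u‖ = ρ) (hre : u.re = 0) :
    ‖(Polynomial.Chebyshev.U ℂ (n : ℤ)).eval ((u + u⁻¹) / 2)‖ =
      (ρ ^ (n + 1) - ρ⁻¹ ^ (n + 1)) / (ρ + ρ⁻¹) := by
  have hp : 0 < ρ := by linarith
  have hi : ρ⁻¹ < 1 := inv_lt_one_of_one_lt₀ hρ
  have hip : 0 < ρ⁻¹ := by positivity
  have hu0 : u ≠ 0 := by
    rintro rfl
    simp at hnu
    linarith
  have hd : ‖u - u⁻¹‖ = ρ + ρ⁻¹ := by
    have := den_normSq u ρ hρ hnu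
    rw [hre] at this
    simp only [ne_eq, OfNat.ofNat_ne_zero, not_false_eq_true, zero_pow, mul_zero, zero_div,
      sub_zero] at this
    exact (pow_left_inj₀ (norm_nonneg _) (by positivity) two_ne_zero).1 this
  have hf := congrArg norm (cheb_formula u hu0 n)
  rw [norm_mul, hd] at hf
  rw [eq_div_iff (by positivity), hf]
  obtain ⟨k, hk⟩ := hodd
  have hN : n + 1 = 2 * (k + 1) := by omega
  have hiu : u⁻¹ ^ 2 = -(ρ⁻¹ : ℂ) ^ 2 := by
    rw [inv_pow, hu, inv_pow, inv_neg]
  have e : u ^ (n + 1) - u⁻¹ ^ (n + 1)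
      = (-1) ^ (k + 1) * ((ρ ^ (n + 1) - ρ⁻¹ ^ (n + 1) : ℝ) : ℂ) := by
    rw [hN, pow_mul, pow_mul, hu, hiu]
    push_cast
    rw [neg_pow, neg_pow ((ρ : ℂ)⁻¹ ^ 2), pow_mul, pow_mul]
    ring
  have hle : ρ⁻¹ ^ (n + 1) ≤ ρ ^ (n + 1) := pow_le_pow_left₀ hip.le (by linarith) _
  rw [e, norm_mul, norm_pow, norm_neg, norm_one, one_pow, one_mul, Complex.norm_real,
    Real.norm_of_nonneg (by linarith)]

/-- for odd `n ≥ 1` and `ρ > 1`,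
`min_{z ∈ E_ρ} |U_n(z)| = (ρ^{n+1} - ρ^{-(n+1)})/(ρ + ρ⁻¹)`, attained if and only if
`z = ± i(ρ - ρ⁻¹)/2`, the two endpoints of the minor axis. -/
theorem chebyshevU_min_odd
    (n : ℕ) (hn : 1 ≤ n) (hodd : Odd n) (ρ : ℝ) (hρ : 1 < ρ) :
    ∀ z ∈ bernsteinEllipse ρ,
      (ρ ^ (n + 1) - ρ⁻¹ ^ (n + 1)) / (ρ + ρ⁻¹) ≤
        ‖(Polynomial.Chebyshev.U ℂ (n : ℤ)).eval z‖ ∧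
      (‖(Polynomial.Chebyshev.U ℂ (n : ℤ)).eval z‖ =
          (ρ ^ (n + 1) - ρ⁻¹ ^ (n + 1)) / (ρ + ρ⁻¹) ↔
        z = Complex.I * (((ρ - ρ⁻¹) / 2 : ℝ) : ℂ) ∨
        z = -(Complex.I * (((ρ - ρ⁻¹) / 2 : ℝ) : ℂ))) := by
  have hp : 0 < ρ := by linarith
  have hi : ρ⁻¹ < 1 := inv_lt_one_of_one_lt₀ hρ
  have hip : 0 < ρ⁻¹ := by positivity
  have hlt : ρ⁻¹ ^ (n + 1) < ρ ^ (n + 1) := pow_lt_pow_left₀ (by linarith) hip.le (by omega)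
  have key : ∀ s : ℝ, s ^ 2 = 1 →
      ((s * ρ : ℝ) * Complex.I + ((s * ρ : ℝ) * Complex.I)⁻¹) / 2
        = s * (Complex.I * (((ρ - ρ⁻¹) / 2 : ℝ) : ℂ)) := by
    intro s hs
    have hs' : s⁻¹ = s := by
      rw [inv_eq_iff_eq_inv]
      exact eq_inv_of_mul_eq_one_left (by rw [← sq, hs])
    have hsc : (s : ℂ)⁻¹ = s := by exact_mod_cast congrArg (Complex.ofReal) hs'
    rw [mul_inv, Complex.inv_I]
    push_cast
    rw [mul_inv, hsc]
    ring
  rintro z ⟨u, hu, rfl⟩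
  have hu0 : u ≠ 0 := by
    rintro rfl
    simp at hu
    linarith
  have hf := congrArg norm (cheb_formula u hu0 n)
  rw [norm_mul] at hf
  have hnum : ρ ^ (n + 1) - ρ⁻¹ ^ (n + 1) ≤ ‖u ^ (n + 1) - u⁻¹ ^ (n + 1)‖ := by
    have := norm_sub_norm_le (u ^ (n + 1)) (u⁻¹ ^ (n + 1))
    rwa [norm_pow, norm_pow, norm_inv, hu] at this
  rw [← hf] at hnum
  have hsq := den_normSq u ρ hρ hu
  have hden : ‖u - u⁻¹‖ ≤ ρ + ρ⁻¹ := by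
    refine (sq_le_sq₀ (norm_nonneg _) (by positivity)).1 ?_
    rw [hsq]
    have : 0 ≤ 4 * u.re ^ 2 / ρ ^ 2 := by positivity
    linarith
  have hB : 0 < ρ + ρ⁻¹ := by positivity
  have hle := mul_le_mul_of_nonneg_left hden
    (norm_nonneg ((Polynomial.Chebyshev.U ℂ (n : ℤ)).eval ((u + u⁻¹) / 2)))
  refine ⟨by rw [div_le_iff₀ hB]; linarith, ?_, ?_⟩
  · intro h
    have h' := h
    rw [eq_div_iff hB.ne'] at h'
    have hpos : 0 < ‖(Polynomial.Chebyshev.U ℂ (n : ℤ)).eval ((u + u⁻¹) / 2)‖ := by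
      rw [h]
      exact div_pos (by linarith) hB
    have hBle : ρ + ρ⁻¹ ≤ ‖u - u⁻¹‖ := le_of_mul_le_mul_left (by linarith) hpos
    rw [le_antisymm hden hBle] at hsq
    have h4 : 4 * u.re ^ 2 / ρ ^ 2 = 0 := by linarith
    have hre : u.re = 0 := by
      have : ρ ≠ 0 := hp.ne'
      simpa [this] using h4
    have him : u.im ^ 2 = ρ ^ 2 := by
      have : Complex.normSq u = ρ ^ 2 := by rw [Complex.normSq_eq_norm_sq, hu]
      rw [Complex.normSq_apply, hre] at this
      linarith
    rcases sq_eq_sq_iff_eq_or_eq_neg.1 him with h5 | h5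
    · left
      have e : u = ((1 * ρ : ℝ) : ℂ) * Complex.I := by
        apply Complex.ext <;> simp [hre, h5]
      rw [e, key 1 (by norm_num)]
      simp
    · right
      have e : u = ((-1 * ρ : ℝ) : ℂ) * Complex.I := by
        apply Complex.ext <;> simp [hre, h5]
      rw [e, key (-1) (by norm_num)]
      simp
  · have val : ∀ s : ℝ, s ^ 2 = 1 →
      ‖(Polynomial.Chebyshev.U ℂ (n : ℤ)).eval (s * (Complex.I * (((ρ - ρ⁻¹) / 2 : ℝ) : ℂ)))‖ =
      (ρ ^ (n + 1) - ρ⁻¹ ^ (n + 1)) / (ρ + ρ⁻¹) := by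
      intro s hs
      rw [← key s hs]
      apply value_at n hodd ρ hρ
      · have hsc : (s : ℂ) ^ 2 = 1 := by exact_mod_cast congrArg (Complex.ofReal) hs
        push_cast
        rw [mul_pow, mul_pow, hsc, Complex.I_sq]
        ring
      · rw [norm_mul, Complex.norm_I, Complex.norm_real, Real.norm_eq_abs, abs_mul,
          show |s| = 1 from by
            rcases (sq_eq_sq_iff_eq_or_eq_neg.1 (hs.trans (one_pow 2).symm)) with h | h <;> simp [h], abs_of_pos hp]
        ring
      · simp
    rintro (h | h)
    · rw [h]
      simpa using val 1 (by norm_num)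
    · rw [h]
      simpa using val (-1) (by norm_num)
end

section
/- Let n ≥ 2 be an even integer and let ρ > 1 satisfy a_{n+1}(ρ) ≥ (n+1) a_1(ρ), where a_k(ρ) = (ρ^k + ρ^{−k})/2 (this holds precisely when ρ ≥ ρ_n*, the unique root in (1,∞) of a_{n+1}(ρ) = (n+1)a_1(ρ)). Then min_{z ∈ E_ρ} |U_n(z)| = (ρ^{n+1} + ρ^{−n−1})/(ρ + ρ⁻¹), and the minimum is attained if and only if z = ± i(ρ − ρ⁻¹)/2, i.e. exactly at the two endpoints of the minor axis of the Bernstein ellipse. -/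
lemma abs_cos_odd_le (k : ℕ) (x : ℝ) :
    |Real.cos ((2 * k + 1 : ℝ) * x)| ≤ (2 * k + 1 : ℝ) * |Real.cos x| ∧
    (Real.cos x ≠ 0 → |Real.cos ((2 * (k + 1 : ℝ) + 1) * x)|
      < (2 * (k + 1 : ℝ) + 1) * |Real.cos x|) := by
  have step : ∀ m : ℝ, |Real.cos ((2 * (m + 1) + 1) * x)| ≤
      |Real.cos ((2 * m + 1) * x)| + 2 * |Real.sin x| * |Real.cos x| := by
    intro m
    have e : (2 * (m + 1) + 1) * x = (2 * m + 1) * x + 2 * x := by ring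
    rw [e, Real.cos_add]
    refine (abs_sub _ _).trans ?_
    rw [abs_mul, abs_mul]
    have h1 := Real.abs_cos_le_one (2 * x)
    have h2 := Real.abs_sin_le_one ((2 * m + 1) * x)
    have h3 : |Real.sin (2 * x)| = 2 * |Real.sin x| * |Real.cos x| := by
      rw [Real.sin_two_mul, abs_mul, abs_mul]; norm_num
    rw [h3]
    refine add_le_add (mul_le_of_le_one_right (abs_nonneg _) h1)
      (mul_le_of_le_one_left (by positivity) h2)
  have hs := Real.abs_sin_le_one x
  have hc := abs_nonneg (Real.cos x)
  have A : |Real.cos ((2 * k + 1 : ℝ) * x)| ≤ (2 * k + 1 : ℝ) * |Real.cos x| := by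
    induction k with
    | zero => simp
    | succ k ih =>
      have := step k
      push_cast
      nlinarith
  refine ⟨A, fun h => ?_⟩
  have hc' : 0 < |Real.cos x| := abs_pos.mpr h
  have hs' : |Real.sin x| < 1 := by
    have := Real.sin_sq_add_cos_sq x
    rw [← sq_abs (Real.sin x), ← sq_abs (Real.cos x)] at this
    nlinarith [abs_nonneg (Real.sin x)]
  have := step k
  nlinarith

lemma norm_sin_sq (x y : ℝ) :
    ‖Complex.sin (x + y * Complex.I)‖ ^ 2 = Real.cosh y ^ 2 - Real.cos x ^ 2 := by
  have e : Complex.sin (x + y * Complex.I) =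
      ((Real.sin x * Real.cosh y : ℝ) : ℂ) + ((Real.cos x * Real.sinh y : ℝ) : ℂ) * Complex.I := by
    rw [Complex.sin_add_mul_I]; push_cast; ring
  rw [e, Complex.sq_norm, Complex.normSq_add_mul_I]
  have h1 := Real.cosh_sq y
  have h2 := Real.sin_sq_add_cos_sq x
  have h3 : Real.sin x ^ 2 = 1 - Real.cos x ^ 2 := by linarith
  rw [mul_pow, mul_pow, h3, h1]; ring

lemma aCoef_eq_cosh (k : ℕ) (ρ : ℝ) (hρ : 0 < ρ) :
    aCoef k ρ = Real.cosh (k * Real.log ρ) := by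
  rw [aCoef, Real.cosh_eq, Real.exp_neg, Real.exp_nat_mul, Real.exp_log hρ, inv_pow]

/-- for even `n ≥ 2` and `ρ > 1` with `a_{n+1}(ρ) ≥ (n+1) a_1(ρ)`,
`min_{z ∈ E_ρ} |U_n(z)| = (ρ^{n+1} + ρ^{-(n+1)})/(ρ + ρ⁻¹)`, attained if and only if
`z = ± i(ρ - ρ⁻¹)/2`, the two endpoints of the minor axis. -/
theorem chebyshevU_min_even
    (n : ℕ) (hn : 2 ≤ n) (heven : Even n) (ρ : ℝ) (hρ : 1 < ρ)
    (hρn : (n + 1 : ℝ) * aCoef 1 ρ ≤ aCoef (n + 1) ρ) :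
    ∀ z ∈ bernsteinEllipse ρ,
      (ρ ^ (n + 1) + ρ⁻¹ ^ (n + 1)) / (ρ + ρ⁻¹) ≤
        ‖(Polynomial.Chebyshev.U ℂ (n : ℤ)).eval z‖ ∧
      (‖(Polynomial.Chebyshev.U ℂ (n : ℤ)).eval z‖ =
          (ρ ^ (n + 1) + ρ⁻¹ ^ (n + 1)) / (ρ + ρ⁻¹) ↔
        z = Complex.I * (((ρ - ρ⁻¹) / 2 : ℝ) : ℂ) ∨
        z = -(Complex.I * (((ρ - ρ⁻¹) / 2 : ℝ) : ℂ))) := by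
  rintro z ⟨u, hu, rfl⟩
  have hρ0 : 0 < ρ := by linarith
  have hu0 : u ≠ 0 := by rintro rfl; simp at hu; linarith
  obtain ⟨k, hk⟩ : ∃ k : ℕ, n = 2 * (k + 1) := by
    obtain ⟨m, hm⟩ := heven
    exact ⟨m - 1, by omega⟩
  set x := u.arg with hx
  set L := Real.log ρ with hL
  have hLpos : 0 < L := Real.log_pos hρ
  have huexp : u = Complex.exp ((x : ℂ) * Complex.I + L) := by
    have := Complex.norm_mul_exp_arg_mul_I u
    rw [hu] at this
    rw [Complex.exp_add, ← Complex.ofReal_exp, hL, Real.exp_log hρ0, mul_comm]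
    exact this.symm
  set w : ℂ := (x : ℂ) + ((-L : ℝ) : ℂ) * Complex.I with hw
  have hwI : w * Complex.I = (x : ℂ) * Complex.I + L := by
    rw [hw]; push_cast; linear_combination (-(L : ℂ)) * Complex.I_sq
  have hz : (u + u⁻¹) / 2 = Complex.cos w := by
    rw [huexp, Complex.cos, neg_mul, hwI, Complex.exp_neg]
  have hz2 : Complex.cos w = ((Real.cos x * Real.cosh L : ℝ) : ℂ) +
      ((Real.sin x * Real.sinh L : ℝ) : ℂ) * Complex.I := by
    rw [hw, Complex.cos_add_mul_I]
    push_cast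
    rw [Complex.cosh_neg, Complex.sinh_neg]; ring
  have hN : ((n : ℂ) + 1) * w = (((n + 1 : ℝ) * x : ℝ) : ℂ) +
      ((-((n + 1 : ℝ) * L) : ℝ) : ℂ) * Complex.I := by
    rw [hw]; push_cast; ring
  have hU := Polynomial.Chebyshev.U_complex_cos w (n : ℤ)
  rw [← hz] at hU
  push_cast at hU
  have hU2 := congrArg (fun t => ‖t‖ ^ 2) hU
  simp only [norm_mul, mul_pow] at hU2
  rw [hN, norm_sin_sq, norm_sin_sq, Real.cosh_neg, Real.cosh_neg] at hU2
  have e1 : aCoef 1 ρ = Real.cosh L := by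
    rw [aCoef_eq_cosh 1 ρ hρ0]; simp [hL]
  have eN : aCoef (n + 1) ρ = Real.cosh ((n + 1 : ℝ) * L) := by
    rw [aCoef_eq_cosh _ ρ hρ0]; push_cast; rfl
  have hT : (ρ ^ (n + 1) + ρ⁻¹ ^ (n + 1)) / (ρ + ρ⁻¹) =
      Real.cosh ((n + 1 : ℝ) * L) / Real.cosh L := by
    rw [← e1, ← eN, aCoef, aCoef, pow_one, pow_one, div_div_div_cancel_right₀ two_ne_zero]
  have hb : (ρ - ρ⁻¹) / 2 = Real.sinh L := by
    rw [Real.sinh_eq, Real.exp_neg, hL, Real.exp_log hρ0]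
  rw [e1, eN] at hρn
  have hc1 : 1 < Real.cosh L := Real.one_lt_cosh.mpr hLpos.ne'
  have hsh : 0 < Real.sinh L := Real.sinh_pos_iff.mpr hLpos
  obtain ⟨_, hlt⟩ := abs_cos_odd_le k x
  have hnk : (2 * (k + 1 : ℝ) + 1) = (n + 1 : ℝ) := by rw [hk]; push_cast; ring
  rw [hnk] at hlt
  have hcosiff : (Complex.cos w = Complex.I * (Real.sinh L : ℂ) ∨
      Complex.cos w = -(Complex.I * (Real.sinh L : ℂ))) ↔ Real.cos x = 0 := by
    rw [hz2]
    constructor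
    · have key : ∀ t : ℝ, ((Real.cos x * Real.cosh L : ℝ) : ℂ) +
          ((Real.sin x * Real.sinh L : ℝ) : ℂ) * Complex.I = Complex.I * (t : ℂ) →
          Real.cos x = 0 := by
        intro t ht
        have := congrArg Complex.re ht
        simp only [Complex.add_re, Complex.re_ofReal_mul, Complex.ofReal_re, Complex.I_re,
          Complex.I_mul_re, Complex.ofReal_im, mul_zero, add_zero, neg_zero] at this
        rcases mul_eq_zero.mp this with h | h
        · exact h
        · linarith
      rintro (h | h)
      · exact key _ h
      · exact key (-Real.sinh L) (by rw [h]; push_cast; ring)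
    · intro h
      have h2 := Real.sin_sq_add_cos_sq x
      rw [h] at h2
      have h3 : (Real.sin x - 1) * (Real.sin x + 1) = 0 := by linarith
      rcases mul_eq_zero.mp h3 with h4 | h4
      · left
        rw [h, show Real.sin x = 1 by linarith]; push_cast; ring
      · right
        rw [h, show Real.sin x = -1 by linarith]; push_cast; ring
  rw [hT, hb, hz, hcosiff, ← hz]
  set V := ‖Polynomial.eval ((u + u⁻¹) / 2) (Polynomial.Chebyshev.U ℂ (n : ℤ))‖ with hV
  have hV0 : 0 ≤ V := norm_nonneg _
  set A := Real.cosh L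
  set B := Real.cosh ((n + 1 : ℝ) * L)
  set c := Real.cos x with hc
  set d := Real.cos ((n + 1 : ℝ) * x) with hd
  have hA : 0 < A := by linarith
  have hB : 0 < B := Real.cosh_pos _
  have hc2 : c ^ 2 ≤ 1 := Real.cos_sq_le_one x
  have hD : 0 < A ^ 2 - c ^ 2 := by nlinarith
  have hVd : (V * A) ^ 2 * (A ^ 2 - c ^ 2) = A ^ 2 * (B ^ 2 - d ^ 2) := by
    rw [← hU2]; ring
  by_cases h0 : c = 0
  · have hd0 : d = 0 := by
      have := (abs_cos_odd_le (k + 1) x).1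
      rw [show (2 * ((k + 1 : ℕ) : ℝ) + 1) = (n + 1 : ℝ) by rw [← hnk]; push_cast; ring,
        ← hc, h0] at this
      simpa using this
    rw [h0, hd0] at hVd
    have hA2 : A ^ 2 ≠ 0 := by positivity
    have h1 : (V * A) ^ 2 = B ^ 2 := by
      apply mul_right_cancel₀ hA2
      linarith
    have h2 : V * A = B := (pow_left_inj₀ (by positivity) hB.le two_ne_zero).mp h1
    have h3 : V = B / A := by rw [eq_div_iff hA.ne', h2]
    exact ⟨h3.ge, fun _ => h0, fun _ => h3⟩
  · have h1 := hlt h0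
    have hcp : 0 < |c| := abs_pos.mpr h0
    have h2 : A * |d| < B * |c| := by
      calc A * |d| < A * ((n + 1 : ℝ) * |c|) := by gcongr
        _ = ((n + 1 : ℝ) * A) * |c| := by ring
        _ ≤ B * |c| := by gcongr
    have h3 : A ^ 2 * d ^ 2 < B ^ 2 * c ^ 2 := by
      have := pow_lt_pow_left₀ h2 (by positivity) two_ne_zero
      rwa [mul_pow, mul_pow, sq_abs, sq_abs] at this
    have h4 : B ^ 2 < (V * A) ^ 2 := by
      apply lt_of_mul_lt_mul_right _ hD.le
      rw [hVd]; linarith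
    have h5 : B < V * A := lt_of_pow_lt_pow_left₀ 2 (by positivity) h4
    have h6 : B / A < V := by rwa [div_lt_iff₀ hA]
    exact ⟨h6.le, fun h => absurd h h6.ne', fun h => absurd h h0⟩
end

section
/- Let 0 < t < s < 1, let ρ ≥ (√2 + √6)/2, and set b = (ρ − ρ⁻¹)/2. Then for every z on the Bernstein ellipse E_ρ one has |z² − s²| · (b² + t²) ≤ (b² + s²) · |z² − t²|; that is, the maximum over E_ρ of |(z² − s²)/(z² − t²)| is attained at the two endpoints ± i b of the minor axis, where its value is (b² + s²)/(b² + t²). -/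
lemma key_poly (B S T k : ℝ) (hB : 1 / 2 ≤ B) (hT : 0 < T) (hTS : T < S) (hS : S < 1)
    (hk : 0 ≤ k) :
    ((B + S) ^ 2 + k * (k + 2 * B - 2 * S * (2 * B + 1))) * (B + T) ^ 2 ≤
    (B + S) ^ 2 * ((B + T) ^ 2 + k * (k + 2 * B - 2 * T * (2 * B + 1))) := by
  have hST : S * T ≤ 1 := by nlinarith
  have h1 : S * T ≤ S := by nlinarith
  have h2 : S * T ≤ T := by nlinarith
  have hB2 : 1 / 4 ≤ B ^ 2 := by nlinarith
  have hB3 : 1 / 8 ≤ B ^ 3 := by nlinarith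
  have h3 : 0 ≤ B * (S + T - 2 * (S * T)) := mul_nonneg (by linarith) (by linarith)
  have h4 : 0 ≤ k * (2 * B + S + T) := mul_nonneg hk (by linarith)
  have h5 : 0 ≤ (k + 2 * B) * (2 * B + S + T) + 2 * (2 * B + 1) * (B ^ 2 - S * T) := by
    nlinarith
  have h6 := mul_nonneg (mul_nonneg hk (sub_nonneg.2 hTS.le)) h5
  nlinarith

lemma normSq_formula (b α β a s : ℝ) (h : α ^ 2 + β ^ 2 = 1) (ha : a ^ 2 = b ^ 2 + 1) :
    ‖(⟨a * α, b * β⟩ : ℂ) ^ 2 - (s : ℂ) ^ 2‖ ^ 2 =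
      (b ^ 2 + s ^ 2) ^ 2 + α ^ 2 * (α ^ 2 + 2 * b ^ 2 - 2 * s ^ 2 * (2 * b ^ 2 + 1)) := by
  rw [Complex.sq_norm, Complex.normSq_apply]
  simp only [pow_two, Complex.sub_re, Complex.sub_im, Complex.mul_re, Complex.mul_im,
    Complex.ofReal_re, Complex.ofReal_im]
  have hβ : β ^ 2 = 1 - α ^ 2 := by linarith
  have e : (a * α * (a * α) - b * β * (b * β) - (s * s - 0 * 0)) *
      (a * α * (a * α) - b * β * (b * β) - (s * s - 0 * 0)) +
      (a * α * (b * β) + b * β * (a * α) - (s * 0 + 0 * s)) *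
      (a * α * (b * β) + b * β * (a * α) - (s * 0 + 0 * s)) =
      (a ^ 2 * α ^ 2 - b ^ 2 * β ^ 2 - s ^ 2) ^ 2 + 4 * a ^ 2 * α ^ 2 * b ^ 2 * β ^ 2 := by ring
  rw [e, hβ, ha]
  ring

lemma minor_sq (ρ : ℝ) (hρ : (Real.sqrt 2 + Real.sqrt 6) / 2 ≤ ρ) :
    0 < ρ ∧ 1 / 2 ≤ ((ρ - ρ⁻¹) / 2) ^ 2 := by
  have p2 : 0 < Real.sqrt 2 := by positivity
  have p6 : 0 < Real.sqrt 6 := by positivity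
  have q2 : Real.sqrt 2 ^ 2 = 2 := Real.sq_sqrt (by norm_num)
  have q6 : Real.sqrt 6 ^ 2 = 6 := Real.sq_sqrt (by norm_num)
  have hp : 0 < ρ := by linarith
  refine ⟨hp, ?_⟩
  have hi : ρ⁻¹ ≤ (Real.sqrt 6 - Real.sqrt 2) / 2 := by
    have : ((Real.sqrt 2 + Real.sqrt 6) / 2)⁻¹ = (Real.sqrt 6 - Real.sqrt 2) / 2 := by
      apply inv_eq_of_mul_eq_one_right
      nlinarith
    rw [← this]
    exact inv_anti₀ (by positivity) hρ
  have hb : Real.sqrt 2 / 2 ≤ (ρ - ρ⁻¹) / 2 := by linarith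
  nlinarith

/-- for `0 < t < s < 1` and `ρ ≥ (√2 + √6)/2`, with `b = (ρ - ρ⁻¹)/2`, for every
`z ∈ E_ρ` one has `|z² - s²| (b² + t²) ≤ (b² + s²) |z² - t²|`; i.e. the maximum over `E_ρ` of
`|(z² - s²)/(z² - t²)|` is attained at the endpoints `± i b` of the minor axis, where its
value is `(b² + s²)/(b² + t²)`. -/
theorem max_rational_at_minor_axis
    (s t ρ : ℝ) (ht : 0 < t) (hts : t < s) (hs : s < 1)
    (hρ : (Real.sqrt 2 + Real.sqrt 6) / 2 ≤ ρ) :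
    (∀ z ∈ bernsteinEllipse ρ,
      ‖z ^ 2 - (s : ℂ) ^ 2‖ * (((ρ - ρ⁻¹) / 2) ^ 2 + t ^ 2) ≤
        (((ρ - ρ⁻¹) / 2) ^ 2 + s ^ 2) * ‖z ^ 2 - (t : ℂ) ^ 2‖) ∧
    ‖(Complex.I * (((ρ - ρ⁻¹) / 2 : ℝ) : ℂ)) ^ 2 - (s : ℂ) ^ 2‖ /
        ‖(Complex.I * (((ρ - ρ⁻¹) / 2 : ℝ) : ℂ)) ^ 2 - (t : ℂ) ^ 2‖ =
      (((ρ - ρ⁻¹) / 2) ^ 2 + s ^ 2) / (((ρ - ρ⁻¹) / 2) ^ 2 + t ^ 2) := by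
  obtain ⟨hp, hB⟩ := minor_sq ρ hρ
  have ha : ((ρ + ρ⁻¹) / 2) ^ 2 = ((ρ - ρ⁻¹) / 2) ^ 2 + 1 := by
    field_simp
    ring
  set b := (ρ - ρ⁻¹) / 2 with hb
  constructor
  · rintro z ⟨u, hu, rfl⟩
    have hn : u.re ^ 2 + u.im ^ 2 = ρ ^ 2 := by
      rw [← hu, Complex.sq_norm, Complex.normSq_apply]
      ring
    have h1 : (u.re / ρ) ^ 2 + (u.im / ρ) ^ 2 = 1 := by
      field_simp
      exact hn
    have hns : Complex.normSq u = ρ ^ 2 := by rw [← hu, Complex.sq_norm]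
    have hz : (u + u⁻¹) / 2 = (⟨(ρ + ρ⁻¹) / 2 * (u.re / ρ), b * (u.im / ρ)⟩ : ℂ) := by
      apply Complex.ext
      · rw [Complex.div_ofNat_re, Complex.add_re, Complex.inv_re, hns]
        field_simp
      · rw [Complex.div_ofNat_im, Complex.add_im, Complex.inv_im, hns, hb]
        field_simp
        ring
    rw [hz]
    have hk := key_poly (b ^ 2) (s ^ 2) (t ^ 2) ((u.re / ρ) ^ 2) hB (by positivity)
      (by nlinarith) (by nlinarith) (by positivity)
    rw [← normSq_formula b _ _ _ s h1 ha, ← normSq_formula b _ _ _ t h1 ha,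
      ← mul_pow, ← mul_pow] at hk
    exact (sq_le_sq₀ (by positivity) (by positivity)).1 hk
  · have e : ∀ r : ℝ, ‖(Complex.I * (b : ℂ)) ^ 2 - (r : ℂ) ^ 2‖ = b ^ 2 + r ^ 2 := by
      intro r
      have : (Complex.I * (b : ℂ)) ^ 2 - (r : ℂ) ^ 2 = ((-(b ^ 2 + r ^ 2) : ℝ) : ℂ) := by
        rw [mul_pow, Complex.I_sq]
        push_cast
        ring
      rw [this, Complex.norm_real, norm_neg, Real.norm_of_nonneg (by positivity)]
    rw [e, e]
end

section
/- Let n ≥ 2 be an integer, let ρ ≥ (√2 + √6)/2, and let λ satisfy either λ > 1, or 0 < λ < 1 with n odd. Then for every z on the Bernstein ellipse E_ρ, |C_n^λ(z)| ≥ |C_n^λ(i(ρ − ρ⁻¹)/2)| = |C_n^λ(−i(ρ − ρ⁻¹)/2)|; that is, the minimum of |C_n^λ| over E_ρ is attained at the two endpoints ± i(ρ − ρ⁻¹)/2 of the minor axis. -/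
/-- The Gegenbauer polynomial `C_n^λ(z)` of a complex variable:
`C_n^λ(z) = ∑_{k=0}^{⌊n/2⌋} (-1)^k [Γ(n-k+λ)/(Γ(λ) k! (n-2k)!)] (2z)^{n-2k}`. -/
noncomputable def gegenbauerC (lam : ℝ) (n : ℕ) (z : ℂ) : ℂ :=
  ∑ k ∈ Finset.range (n / 2 + 1),
    (-1 : ℂ) ^ k *
      ((Real.Gamma ((n : ℝ) - k + lam) /
        (Real.Gamma lam * (Nat.factorial k) * (Nat.factorial (n - 2 * k))) : ℝ) : ℂ) *
      (2 * z) ^ (n - 2 * k)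

namespace GegMin

open Polynomial

/-- hypergeometric ODE in the variable s = x^2 -/
def HODE (m : ℕ) (g d : ℝ) (q : ℝ[X]) : Prop :=
  X * (1 - X) * derivative (derivative q) + (C g - C (g + d) * X) * derivative q
    + C ((m : ℝ) * (m - 1 + g + d)) * q = 0

lemma hode_coeff {m : ℕ} {g d : ℝ} {q : ℝ[X]} : HODE m g d q ↔ ∀ k : ℕ,
    ((k : ℝ) + 1) * (k + g) * q.coeff (k + 1)
      = ((k : ℝ) - m) * (k + m + g + d - 1) * q.coeff k := by
  unfold HODE
  have key : ∀ k : ℕ, (X * (1 - X) * derivative (derivative q)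
      + (C g - C (g + d) * X) * derivative q
      + C ((m : ℝ) * (m - 1 + g + d)) * q).coeff k =
      ((k : ℝ) + 1) * (k + g) * q.coeff (k + 1)
      - ((k : ℝ) - m) * (k + m + g + d - 1) * q.coeff k := by
    intro k
    have e : X * (1 - X) * derivative (derivative q)
      + (C g - C (g + d) * X) * derivative q
      + C ((m : ℝ) * (m - 1 + g + d)) * q =
      derivative (derivative q) * X - derivative (derivative q) * X * X
      + C g * derivative q - C (g + d) * (derivative q * X)
      + C ((m : ℝ) * (m - 1 + g + d)) * q := by ring
    rw [e]
    rcases k with _ | _ | k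
    · simp [coeff_derivative]
      ring_nf
      simp
    · simp only [coeff_add, coeff_sub, coeff_C_mul, coeff_mul_X, coeff_derivative, zero_add,
        mul_coeff_zero, coeff_X_zero, mul_zero]
      push_cast
      ring
    · simp only [coeff_add, coeff_sub, coeff_C_mul, coeff_mul_X, coeff_derivative]
      push_cast
      ring
  rw [Polynomial.ext_iff]
  constructor
  · intro h k
    have := h k
    rw [key] at this
    simp at this
    linarith
  · intro h k
    rw [key, h k]
    simp

lemma hode_unique0 {m : ℕ} {g d : ℝ} (hg : 0 < g) {q : ℝ[X]} (h : HODE m g d q)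
    (h0 : q.coeff 0 = 0) : q = 0 := by
  rw [hode_coeff] at h
  ext k
  rw [coeff_zero]
  induction k with
  | zero => exact h0
  | succ k ih =>
    have := h k
    rw [ih, mul_zero] at this
    have hk : ((k : ℝ) + 1) * (k + g) ≠ 0 := by positivity
    exact (mul_eq_zero.mp this).resolve_left hk

lemma hode_smul {m : ℕ} {g d : ℝ} {q : ℝ[X]} (h : HODE m g d q) (c : ℝ) :
    HODE m g d (C c * q) := by
  rw [hode_coeff] at h ⊢
  intro k
  simp only [coeff_C_mul]
  linear_combination c * h k

lemma hode_unique {m : ℕ} {g d : ℝ} (hg : 0 < g) {q r : ℝ[X]} (h : HODE m g d q)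
    (hr : HODE m g d r) (h0 : r.coeff 0 ≠ 0) : q = C (q.coeff 0 / r.coeff 0) * r := by
  have h1 := hode_smul hr (q.coeff 0 / r.coeff 0)
  have h2 : HODE m g d (q - C (q.coeff 0 / r.coeff 0) * r) := by
    rw [hode_coeff] at h h1 ⊢
    intro k
    rw [coeff_sub, coeff_sub]
    linear_combination h k - h1 k
  have := hode_unique0 hg h2 (by simp; field_simp; simp)
  exact sub_eq_zero.mp this

lemma exists_roots (m : ℕ) : ∀ g d : ℝ, 0 < g → 0 < d → ∃ c : Fin m → ℝ,
    StrictMono c ∧ (∀ j, 0 < c j ∧ c j < 1) ∧ HODE m g d (∏ j, (X - C (c j))) := by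
  induction m with
  | zero =>
    intro g d _ _
    refine ⟨Fin.elim0, fun i => i.elim0, fun i => i.elim0, ?_⟩
    simp [HODE]
  | succ m ih =>
    intro g d hg hd
    obtain ⟨c, hc, hc01, ho⟩ := ih (g + 1) (d + 1) (by linarith) (by linarith)
    set r : ℝ[X] := ∏ j, (X - C (c j)) with hr
    set q : ℝ[X] := X * (1 - X) * derivative r + (C g - C (g + d) * X) * r with hq
    have hrm : r.Monic := monic_prod_of_monic _ _ (fun i _ => monic_X_sub_C _)
    have hrd : r.natDegree = m := by
      rw [hr, natDegree_prod_of_monic _ _ (fun i _ => monic_X_sub_C _)]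
      simp
    have hq' : derivative q = C (-((m : ℝ) + 1) * (m + g + d)) * r := by
      unfold HODE at ho
      rw [hq]
      simp only [derivative_add, derivative_mul, derivative_sub, derivative_X, derivative_one,
        derivative_C, map_add, map_mul, map_sub, map_neg, map_one] at ho ⊢
      linear_combination ho
    have hqo : HODE (m + 1) g d q := by
      unfold HODE
      rw [hq']
      simp only [derivative_mul, derivative_C, zero_mul, zero_add]
      rw [hq]
      simp only [map_add, map_mul, map_sub, map_neg, map_one, Nat.cast_add, Nat.cast_one]
      ring
    -- Rolle
    let p : Fin (m + 2) → ℝ := Fin.snoc (α := fun _ => ℝ) (Fin.cons (α := fun _ => ℝ) 0 c) 1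
    have hp0 : ∀ j : Fin (m + 2), 0 ≤ p j ∧ p j ≤ 1 ∧ (p j = 0 ∨ p j = 1 ∨ r.eval (p j) = 0) := by
      intro j
      refine Fin.lastCases ?_ (fun j => ?_) j
      · simp [p]
      · refine Fin.cases ?_ (fun j => ?_) j
        · simp [p]
        · simp only [p, Fin.snoc_castSucc, Fin.cons_succ]
          refine ⟨(hc01 j).1.le, (hc01 j).2.le, Or.inr (Or.inr ?_)⟩
          rw [hr, eval_prod]
          exact Finset.prod_eq_zero (Finset.mem_univ j) (by simp)
    have hpm : StrictMono p := by
      rw [Fin.strictMono_iff_lt_succ]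
      intro j
      refine Fin.lastCases ?_ (fun j => ?_) j
      · simp only [p, Fin.snoc_castSucc, Fin.succ_last, Fin.snoc_last]
        refine Fin.cases ?_ (fun j => ?_) (Fin.last m)
        · simp
        · simpa using (hc01 j).2
      · rw [← Fin.castSucc_succ]
        simp only [p, Fin.snoc_castSucc, Fin.cons_succ]
        revert j
        cases m with
        | zero => intro j; exact j.elim0
        | succ m =>
          intro j
          refine Fin.cases ?_ (fun j => ?_) j
          · simpa using (hc01 0).1
          · rw [← Fin.succ_castSucc, Fin.cons_succ]
            exact hc (Fin.castSucc_lt_succ)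
    have hroot : ∀ j : Fin (m + 1), ∃ x, p j.castSucc < x ∧ x < p j.succ ∧ q.eval x = 0 := by
      intro j
      let f : ℝ → ℝ := fun x => x ^ g * (1 - x) ^ d * r.eval x
      have hlt : p j.castSucc < p j.succ := hpm (Fin.castSucc_lt_succ)
      have hf0 : ∀ j, f (p j) = 0 := by
        intro j
        rcases (hp0 j).2.2 with h | h | h
        · simp [f, h, Real.zero_rpow hg.ne']
        · simp [f, h, Real.zero_rpow hd.ne']
        · simp [f, h]
      have hcont : ContinuousOn f (Set.Icc (p j.castSucc) (p j.succ)) := by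
        apply Continuous.continuousOn
        refine ((Real.continuous_rpow_const hg.le).mul ?_).mul r.continuous
        exact (Real.continuous_rpow_const hd.le).comp (continuous_const.sub continuous_id)
      obtain ⟨x, hx, hx'⟩ := exists_hasDerivAt_eq_zero (f := f)
        (f' := fun x => x ^ (g - 1) * (1 - x) ^ (d - 1) * q.eval x) hlt hcont
        (by rw [hf0, hf0]) (by
          intro x hx
          have hx0 : 0 < x := lt_of_le_of_lt (hp0 _).1 hx.1
          have hx1 : 0 < 1 - x := by linarith [lt_of_lt_of_le hx.2 (hp0 _).2.1]
          have h1 := Real.hasDerivAt_rpow_const (x := x) (p := g) (Or.inl hx0.ne')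
          have h2 := ((hasDerivAt_id x).const_sub 1).rpow_const (p := d) (Or.inl hx1.ne')
          have h3 := (h1.mul h2).mul (r.hasDerivAt x)
          refine h3.congr_deriv ?_
          have e1 : x ^ g = x ^ (g - 1) * x := by
            rw [Real.rpow_sub_one hx0.ne']; field_simp
          have e2 : (1 - x) ^ d = (1 - x) ^ (d - 1) * (1 - x) := by
            rw [Real.rpow_sub_one hx1.ne']; field_simp
          simp only [hq, eval_add, eval_mul, eval_sub, eval_X, eval_one, eval_C, id, Pi.mul_apply]
          rw [e1, e2]
          ring)
      have hx0 : 0 < x := lt_of_le_of_lt (hp0 _).1 hx.1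
      have hx1 : 0 < 1 - x := by linarith [lt_of_lt_of_le hx.2 (hp0 _).2.1]
      refine ⟨x, hx.1, hx.2, ?_⟩
      have : x ^ (g - 1) * (1 - x) ^ (d - 1) ≠ 0 := by positivity
      exact (mul_eq_zero.mp hx').resolve_left this
    choose y hy1 hy2 hy3 using hroot
    have hym : StrictMono y := by
      rw [Fin.strictMono_iff_lt_succ]
      intro j
      have h1 := hy2 j.castSucc
      have h2 := hy1 j.succ
      rw [← Fin.succ_castSucc] at h2
      exact h1.trans h2
    have hy01 : ∀ j, 0 < y j ∧ y j < 1 := fun j =>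
      ⟨lt_of_le_of_lt (hp0 _).1 (hy1 j), lt_of_lt_of_le (hy2 j) (hp0 _).2.1⟩
    refine ⟨y, hym, hy01, ?_⟩
    set P : ℝ[X] := ∏ j, (X - C (y j)) with hP
    have hPm : P.Monic := monic_prod_of_monic _ _ (fun i _ => monic_X_sub_C _)
    have hPd : P.natDegree = m + 1 := by
      rw [hP, natDegree_prod_of_monic _ _ (fun i _ => monic_X_sub_C _)]
      simp
    have hqne : q ≠ 0 := by
      intro h0
      rw [h0, derivative_zero] at hq'
      have := hq'.symm
      rw [mul_eq_zero] at this
      rcases this with h | h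
      · rw [C_eq_zero] at h
        have : (0 : ℝ) < ((m : ℝ) + 1) * (m + g + d) := by positivity
        linarith
      · exact hrm.ne_zero h
    have hqd : q.natDegree ≤ m + 1 := by
      have h1 : (derivative q).natDegree = m := by
        rw [hq', natDegree_C_mul, hrd]
        have : (0 : ℝ) < ((m : ℝ) + 1) * (m + g + d) := by positivity
        linarith
      rw [natDegree_derivative] at h1
      omega
    have hdvd : P ∣ q := by
      rw [hP]
      apply Finset.prod_dvd_of_coprime
      · intro i _ j _ hij
        exact pairwise_coprime_X_sub_C hym.injective hij
      · intro i _
        exact dvd_iff_isRoot.mpr (hy3 i)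
    obtain ⟨s, hs⟩ := hdvd
    have hsne : s ≠ 0 := by rintro rfl; exact hqne (by rw [hs, mul_zero])
    have hsd : s.natDegree = 0 := by
      rw [hs, natDegree_mul hPm.ne_zero hsne] at hqd
      omega
    obtain ⟨a, ha⟩ := natDegree_eq_zero.mp hsd
    have hane : a ≠ 0 := by rintro rfl; exact hsne (by rw [← ha, C_0])
    have : P = C a⁻¹ * q := by
      rw [hs, ← ha, mul_comm P, ← mul_assoc, ← C_mul, inv_mul_cancel₀ hane, C_1, one_mul]
    rw [this]
    exact hode_smul hqo _

lemma electro {m : ℕ} {g d : ℝ} {c : Fin m → ℝ} (hc : StrictMono c)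
    (h01 : ∀ j, 0 < c j ∧ c j < 1) (ho : HODE m g d (∏ j, (X - C (c j)))) (j : Fin m) :
    2 * ∑ k ∈ Finset.univ.erase j, (c j - c k)⁻¹ = - g / c j + d / (1 - c j) := by
  set G : ℝ[X] := ∏ k ∈ Finset.univ.erase j, (X - C (c k)) with hG
  have hP : (∏ j, (X - C (c j))) = (X - C (c j)) * G :=
    (Finset.mul_prod_erase _ _ (Finset.mem_univ j)).symm
  have hne : ∀ k ∈ Finset.univ.erase j, c j - c k ≠ 0 := by
    intro k hk
    rw [sub_ne_zero]
    exact fun h => (Finset.ne_of_mem_erase hk) (hc.injective h).symm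
  have hGne : G.eval (c j) ≠ 0 := by
    rw [hG, eval_prod, Finset.prod_ne_zero_iff]
    intro k hk
    simpa using hne k hk
  have hG' : (derivative G).eval (c j) = G.eval (c j) *
      ∑ k ∈ Finset.univ.erase j, (c j - c k)⁻¹ := by
    rw [hG, derivative_prod_finset, eval_finsetSum, Finset.mul_sum]
    refine Finset.sum_congr rfl fun k hk => ?_
    rw [← Finset.mul_prod_erase _ _ hk]
    have := hne k hk
    simp
    field_simp
  unfold HODE at ho
  rw [hP] at ho
  have h := congrArg (eval (c j)) ho
  simp only [derivative_mul, derivative_add, derivative_sub, derivative_X, derivative_C, eval_add,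
    eval_mul, eval_sub, eval_X, eval_C, eval_one, eval_zero, sub_self, hG', sub_zero, derivative_one] at h
  have h1 := (h01 j).1
  have h2 : 0 < 1 - c j := by linarith [(h01 j).2]
  have h3 : (c j * (1 - c j) * (2 * ∑ k ∈ Finset.univ.erase j, (c j - c k)⁻¹)
     + (g - (g + d) * c j)) = 0 := by
    refine (mul_eq_zero.mp ?_).resolve_left hGne
    linear_combination h
  have h4 : c j * (1 - c j) ≠ 0 := by positivity
  apply mul_left_cancel₀ h4
  generalize ∑ k ∈ Finset.univ.erase j, (c j - c k)⁻¹ = S at *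
  field_simp
  linarith

lemma comparison {m : ℕ} {g d d' : ℝ} (hg : 0 < g) (hd : 0 < d) (hdd : d ≤ d') {c c' : Fin m → ℝ}
    (hc : StrictMono c) (h01 : ∀ j, 0 < c j ∧ c j < 1) (ho : HODE m g d (∏ j, (X - C (c j))))
    (hc' : StrictMono c') (h01' : ∀ j, 0 < c' j ∧ c' j < 1)
    (ho' : HODE m g d' (∏ j, (X - C (c' j)))) (j : Fin m) : c' j ≤ c j := by
  by_contra hcon
  push Not at hcon
  obtain ⟨i, -, hi⟩ := Finset.exists_max_image Finset.univ (fun j => c' j - c j)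
    ⟨j, Finset.mem_univ j⟩
  have hpos : c i < c' i := by have := hi j (Finset.mem_univ j); linarith
  have e := electro hc h01 ho i
  have e' := electro hc' h01' ho' i
  have hsum : ∑ k ∈ Finset.univ.erase i, (c' i - c' k)⁻¹ ≤
      ∑ k ∈ Finset.univ.erase i, (c i - c k)⁻¹ := by
    apply Finset.sum_le_sum
    intro k hk
    have hle := hi k (Finset.mem_univ k)
    rcases lt_or_gt_of_ne (Finset.ne_of_mem_erase hk) with h | h
    · have := hc h
      exact inv_anti₀ (by linarith) (by linarith)
    · have h1 := hc h
      have h2 := hc' h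
      rw [inv_le_inv_of_neg (by linarith) (by linarith)]
      linarith
  have h1 := h01 i
  have h1' := h01' i
  have a1 : g / c' i < g / c i := div_lt_div_of_pos_left hg h1.1 hpos
  have a2 : d / (1 - c i) ≤ d' / (1 - c' i) :=
    div_le_div₀ (by linarith) hdd (by linarith) (by linarith)
  rw [neg_div] at e e'
  linarith

/-- factored form of a solution -/
lemma factored {m : ℕ} {g d : ℝ} (hg : 0 < g) (hd : 0 < d) {q : ℝ[X]} (h : HODE m g d q) :
    ∃ c : Fin m → ℝ, StrictMono c ∧ (∀ j, 0 < c j ∧ c j < 1) ∧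
      HODE m g d (∏ j, (X - C (c j))) ∧ ∃ k : ℝ, ∀ w : ℂ,
        ‖aeval w q‖ = |k| * ∏ j, ‖w - (c j : ℂ)‖ := by
  obtain ⟨c, hc, h01, ho⟩ := exists_roots m g d hg hd
  refine ⟨c, hc, h01, ho, q.coeff 0 / (∏ j, (X - C (c j))).coeff 0, fun w => ?_⟩
  have h0 : (∏ j, (X - C (c j))).coeff 0 ≠ 0 := by
    rw [coeff_zero_eq_eval_zero, eval_prod, Finset.prod_ne_zero_iff]
    intro j _
    simpa using (h01 j).1.ne'
  conv_lhs => rw [hode_unique hg h ho h0]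
  simp only [map_mul, map_prod, aeval_C, map_sub, aeval_X, norm_mul, norm_prod,
    Complex.coe_algebraMap, Complex.norm_real, Real.norm_eq_abs]

lemma factor_ineq {a t c c' : ℝ} (ha : 2 ≤ a) (ht : -1 ≤ t) (hc1 : c ≤ 1)
    (hc' : -1 ≤ c') (hcc : c' ≤ c) :
    (t ^ 2 + a ^ 2 - 1 - 2 * a * c * t + c ^ 2) * (a + c') ^ 2 ≤
    (t ^ 2 + a ^ 2 - 1 - 2 * a * c' * t + c' ^ 2) * (a + c) ^ 2 := by
  have key : (t ^ 2 + a ^ 2 - 1 - 2 * a * c' * t + c' ^ 2) * (a + c) ^ 2 -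
      (t ^ 2 + a ^ 2 - 1 - 2 * a * c * t + c ^ 2) * (a + c') ^ 2 =
      (1 + t) * (c - c') * ((2 * a ^ 2 + t - 1 - a * (a + c)) * (a + c')
        + (2 * a ^ 2 + t - 1 - a * (a + c')) * (a + c)) := by ring
  have h1 : 0 ≤ 2 * a ^ 2 + t - 1 - a * (a + c) := by nlinarith
  have h2 : 0 ≤ 2 * a ^ 2 + t - 1 - a * (a + c') := by nlinarith
  have h3 : 0 ≤ (1 + t) * (c - c') * ((2 * a ^ 2 + t - 1 - a * (a + c)) * (a + c')
        + (2 * a ^ 2 + t - 1 - a * (a + c')) * (a + c)) := by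
    apply mul_nonneg (mul_nonneg (by linarith) (by linarith))
    exact add_nonneg (mul_nonneg h1 (by linarith)) (mul_nonneg h2 (by linarith))
  linarith

lemma ellipse_norm {ρ : ℝ} (hρ : 0 < ρ) {u : ℂ} (hu : ‖u‖ = ρ) :
    ∃ t : ℝ, -1 ≤ t ∧ ∀ s : ℝ, ‖((u + u⁻¹) / 2) ^ 2 - (s : ℂ)‖ ^ 2 =
      (t ^ 2 + ((ρ ^ 2 + (ρ⁻¹) ^ 2) / 2) ^ 2 - 1
        - 2 * ((ρ ^ 2 + (ρ⁻¹) ^ 2) / 2) * (2 * s - 1) * t + (2 * s - 1) ^ 2) / 4 := by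
  have hne : (ρ : ℂ) ≠ 0 := by exact_mod_cast hρ.ne'
  set θ := Complex.arg u
  have hue : u = ρ * (Real.cos θ + Real.sin θ * Complex.I) := by
    have := Complex.norm_mul_cos_add_sin_mul_I u
    rw [hu] at this
    rw [← this]; push_cast; rfl
  have hcs := Real.sin_sq_add_cos_sq θ
  set x := Real.cos θ
  set y := Real.sin θ
  have hcsC : (y : ℂ) ^ 2 + (x : ℂ) ^ 2 = 1 := by exact_mod_cast hcs
  have hui : u⁻¹ = (ρ⁻¹ : ℝ) * (x - y * Complex.I) := by
    apply inv_eq_of_mul_eq_one_right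
    rw [hue]
    push_cast
    field_simp
    linear_combination hcsC - (y : ℂ) ^ 2 * Complex.I_sq
  refine ⟨x ^ 2 - y ^ 2, by nlinarith, fun s => ?_⟩
  have hz : ((u + u⁻¹) / 2) ^ 2 - (s : ℂ) =
      ((((ρ ^ 2 + (ρ⁻¹) ^ 2) / 2 * (x ^ 2 - y ^ 2) - (2 * s - 1)) / 2 : ℝ) : ℂ) +
      (((ρ ^ 2 - (ρ⁻¹) ^ 2) / 2 * (2 * x * y) / 2 : ℝ) : ℂ) * Complex.I := by
    have h1 : (ρ : ℂ) * ((ρ⁻¹ : ℝ) : ℂ) = 1 := by push_cast; field_simp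
    have e : ((u + u⁻¹) / 2) ^ 2 = (u ^ 2 + (u⁻¹) ^ 2 + 2 * 1) / 4 := by
      have : u ≠ 0 := by intro h; rw [h] at hu; simp at hu; linarith
      field_simp; ring
    rw [e, hui, hue]
    push_cast
    linear_combination ((ρ : ℂ) ^ 2 + ((ρ : ℂ)⁻¹) ^ 2) * (y : ℂ) ^ 2 / 4 * Complex.I_sq
  rw [hz, ← Complex.normSq_eq_norm_sq, Complex.normSq_add_mul_I]
  have h1 : ρ * ρ⁻¹ = 1 := mul_inv_cancel₀ hρ.ne'
  generalize ρ⁻¹ = r at *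
  have h2 : ρ ^ 2 * r ^ 2 = 1 := by rw [← mul_pow, h1, one_pow]
  have h3 : (2 * x * y) ^ 2 = 1 - (x ^ 2 - y ^ 2) ^ 2 := by
    linear_combination (y ^ 2 + x ^ 2 + 1) * hcs
  linear_combination ((ρ ^ 2 - r ^ 2) / 2) ^ 2 / 4 * h3 + (-1 + (x ^ 2 - y ^ 2) ^ 2) / 4 * h2

lemma main_compare {m ε : ℕ} {g d d' : ℝ} (hg : 0 < g) (hd : 0 < d) (hdd : d ≤ d') {q q' : ℝ[X]}
    (hq : HODE m g d q) (hq' : HODE m g d' q') {ρ : ℝ} (hρ : 1 < ρ)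
    (ha : 4 ≤ ρ ^ 2 + (ρ⁻¹) ^ 2) {u : ℂ} (hu : ‖u‖ = ρ)
    (hne : aeval (((u + u⁻¹) / 2) ^ 2) q ≠ 0)
    (hb : ‖aeval ((-((ρ - ρ⁻¹) / 2) ^ 2 : ℝ) : ℂ) q‖ * ((ρ - ρ⁻¹) / 2) ^ ε ≤
      ‖aeval (((u + u⁻¹) / 2) ^ 2) q‖ * ‖(u + u⁻¹) / 2‖ ^ ε) :
    ‖aeval ((-((ρ - ρ⁻¹) / 2) ^ 2 : ℝ) : ℂ) q'‖ * ((ρ - ρ⁻¹) / 2) ^ ε ≤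
      ‖aeval (((u + u⁻¹) / 2) ^ 2) q'‖ * ‖(u + u⁻¹) / 2‖ ^ ε := by
  obtain ⟨c, hc, h01, ho, k, hk⟩ := factored hg hd hq
  obtain ⟨c', hc', h01', ho', k', hk'⟩ := factored hg (hd.trans_le hdd) hq'
  have hcmp := comparison hg hd hdd hc h01 ho hc' h01' ho'
  obtain ⟨t, ht, hs⟩ := ellipse_norm (by linarith) hu
  have hk0 : 0 < |k| := by
    rw [abs_pos]
    rintro rfl
    have := hk (((u + u⁻¹) / 2) ^ 2)
    simp only [abs_zero, zero_mul, norm_eq_zero] at this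
    exact hne this
  rw [hk, hk] at hb
  rw [hk', hk']
  have hr1 : ρ⁻¹ < 1 := inv_lt_one_of_one_lt₀ hρ
  have hy : 0 < (ρ - ρ⁻¹) / 2 := by linarith
  have hya : ((ρ - ρ⁻¹) / 2) ^ 2 = ((ρ ^ 2 + (ρ⁻¹) ^ 2) / 2 - 1) / 2 := by
    field_simp; ring
  set y := (ρ - ρ⁻¹) / 2
  set z := (u + u⁻¹) / 2
  set a := (ρ ^ 2 + (ρ⁻¹) ^ 2) / 2
  have hnorm : ∀ s : ℝ, 0 < s → ‖((-y ^ 2 : ℝ) : ℂ) - (s : ℂ)‖ = y ^ 2 + s := by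
    intro s hs
    rw [← Complex.ofReal_sub, Complex.norm_real, Real.norm_eq_abs, abs_of_neg (by nlinarith)]
    ring
  have e1 : ∏ j, ‖((-y ^ 2 : ℝ) : ℂ) - (c j : ℂ)‖ = ∏ j, (y ^ 2 + c j) :=
    Finset.prod_congr rfl fun j _ => hnorm _ (h01 j).1
  have e2 : ∏ j, ‖((-y ^ 2 : ℝ) : ℂ) - (c' j : ℂ)‖ = ∏ j, (y ^ 2 + c' j) :=
    Finset.prod_congr rfl fun j _ => hnorm _ (h01' j).1
  rw [e1] at hb
  rw [e2]
  have hprod : (∏ j, ‖z ^ 2 - (c j : ℂ)‖) * (∏ j, (y ^ 2 + c' j)) ≤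
      (∏ j, ‖z ^ 2 - (c' j : ℂ)‖) * (∏ j, (y ^ 2 + c j)) := by
    rw [← Finset.prod_mul_distrib, ← Finset.prod_mul_distrib]
    apply Finset.prod_le_prod
    · intro j _
      have := (h01' j).1
      positivity
    · intro j _
      have p1 := h01 j
      have p2 := h01' j
      have p3 := hcmp j
      apply le_of_sq_le_sq _ (by have := p1.1; positivity)
      rw [mul_pow, mul_pow, hs, hs, hya]
      have := factor_ineq (a := a) (t := t) (c := 2 * c j - 1) (c' := 2 * c' j - 1)
        (by simp only [a]; linarith) ht (by linarith) (by linarith) (by linarith)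
      nlinarith
  have hY : 0 < ∏ j, (y ^ 2 + c j) := Finset.prod_pos fun j _ => by have := (h01 j).1; positivity
  have hY' : 0 < ∏ j, (y ^ 2 + c' j) := Finset.prod_pos fun j _ => by have := (h01' j).1; positivity
  have hZ' : 0 ≤ ∏ j, ‖z ^ 2 - (c' j : ℂ)‖ := Finset.prod_nonneg fun j _ => norm_nonneg _
  have hZ : 0 ≤ ∏ j, ‖z ^ 2 - (c j : ℂ)‖ := Finset.prod_nonneg fun j _ => norm_nonneg _
  generalize (∏ j, (y ^ 2 + c j)) = Y at *
  generalize (∏ j, (y ^ 2 + c' j)) = Y' at *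
  generalize (∏ j, ‖z ^ 2 - (c j : ℂ)‖) = Z at *
  generalize (∏ j, ‖z ^ 2 - (c' j : ℂ)‖) = Z' at *
  have hze : 0 ≤ ‖z‖ ^ ε := by positivity
  have hb' : Y * y ^ ε ≤ Z * ‖z‖ ^ ε := by
    apply le_of_mul_le_mul_left _ hk0
    linarith
  have : Y' * y ^ ε ≤ Z' * ‖z‖ ^ ε := by
    apply le_of_mul_le_mul_left _ hY
    calc Y * (Y' * y ^ ε) = Y' * (Y * y ^ ε) := by ring
      _ ≤ Y' * (Z * ‖z‖ ^ ε) := mul_le_mul_of_nonneg_left hb' hY'.le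
      _ = (Z * Y') * ‖z‖ ^ ε := by ring
      _ ≤ (Z' * Y) * ‖z‖ ^ ε := mul_le_mul_of_nonneg_right hprod hze
      _ = _ := by ring
  have := mul_le_mul_of_nonneg_left this (abs_nonneg k')
  linarith

lemma transfer {m ε n : ℕ} (hε : ε = 0 ∨ ε = 1) (hn : n = 2 * m + ε) {lam : ℝ} {p q : ℝ[X]}
    (hpq : p = X ^ ε * expand ℝ 2 q)
    (h : (1 - X ^ 2) * derivative (derivative p) =
      C (2 * lam + 1) * X * derivative p - C ((n : ℝ) * (n + 2 * lam)) * p) :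
    HODE m (1 / 2 + ε) (lam + 1 / 2) q := by
  unfold HODE
  apply expand_injective (R := ℝ) (n := 2) (by norm_num)
  rw [map_zero]
  simp only [map_add, map_mul, map_sub, map_one, expand_C, expand_X]
  have h4 : (4 : ℝ[X]) ≠ 0 := by norm_num
  have e2 : (C (2 : ℝ) : ℝ[X]) = 2 := rfl
  have e3 : (C (2 : ℝ)⁻¹ : ℝ[X]) * 2 = 1 := by rw [← e2, ← C_mul]; norm_num
  subst hpq hn
  rcases hε with rfl | rfl
  · simp [derivative_mul, derivative_expand] at h ⊢
    rw [e2] at h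
    apply (mul_eq_zero.mp _).resolve_left h4
    linear_combination h + ((2 - 4 * X ^ 2) * expand ℝ 2 (derivative q)
      + 4 * m * expand ℝ 2 q) * e3
  · simp [derivative_mul, derivative_expand] at h ⊢
    rw [e2] at h
    apply (mul_eq_zero.mp _).resolve_left (mul_ne_zero h4 (X_ne_zero (R := ℝ)))
    linear_combination h + X * ((2 - 4 * X ^ 2) * expand ℝ 2 (derivative q)
      + 4 * m * expand ℝ 2 q) * e3

lemma parity {f : ℕ → ℝ[X]} {a : ℝ} (h0 : f 0 = 1) (h1 : f 1 = C a * X)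
    (h : ∀ n, f (n + 2) = 2 * X * f (n + 1) - f n) (m : ℕ) :
    (∃ q, f (2 * m) = X ^ 0 * expand ℝ 2 q) ∧ ∃ q, f (2 * m + 1) = X ^ 1 * expand ℝ 2 q := by
  induction m with
  | zero => exact ⟨⟨1, by simp [h0]⟩, ⟨C a, by rw [mul_zero, zero_add, h1, expand_C, pow_one, mul_comm]⟩⟩
  | succ m ih =>
    obtain ⟨⟨q, hq⟩, r, hr⟩ := ih
    have e0 : f (2 * (m + 1)) = X ^ 0 * expand ℝ 2 (2 * X * r - q) := by
      rw [show 2 * (m + 1) = 2 * m + 2 by ring, h, hq, hr]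
      simp only [map_sub, map_mul, expand_X, map_ofNat]
      ring
    refine ⟨⟨_, e0⟩, 2 * (2 * X * r - q) - r, ?_⟩
    rw [show 2 * (m + 1) + 1 = (2 * m + 1) + 2 by ring, h,
      show 2 * m + 1 + 1 = 2 * (m + 1) by ring, e0, hr]
    simp only [map_sub, map_mul, expand_X, map_ofNat]
    ring

lemma parity' {f : ℕ → ℝ[X]} {a : ℝ} (h0 : f 0 = 1) (h1 : f 1 = C a * X)
    (h : ∀ n, f (n + 2) = 2 * X * f (n + 1) - f n) {n m ε : ℕ} (hε : ε = 0 ∨ ε = 1)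
    (hn : n = 2 * m + ε) : ∃ q, f n = X ^ ε * expand ℝ 2 q := by
  subst hn
  rcases hε with rfl | rfl
  · exact (parity h0 h1 h m).1
  · exact (parity h0 h1 h m).2

lemma U_solution {n m ε : ℕ} (hε : ε = 0 ∨ ε = 1) (hn : n = 2 * m + ε) :
    ∃ q, HODE m (1 / 2 + ε) (1 + 1 / 2) q ∧ ∀ z : ℂ,
      (Chebyshev.U ℂ n).eval z = z ^ ε * aeval (z ^ 2) q := by
  obtain ⟨q, hq⟩ := parity' (f := fun n : ℕ => Chebyshev.U ℝ n) (a := 2) (by simp)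
    (by simp only [Nat.cast_one, Chebyshev.U_one]; rfl) (fun n => by
      have := Chebyshev.U_add_two ℝ n
      push_cast
      exact this) hε hn
  refine ⟨q, transfer hε hn hq ?_, fun z => ?_⟩
  · have := Chebyshev.one_sub_X_sq_mul_derivative_derivative_U_eq_poly_in_U (R := ℝ) n
    simp only [Function.iterate_succ, Function.iterate_zero, Function.comp_apply, id] at this
    rw [this]
    have e3 : (C (2 * 1 + 1 : ℝ) : ℝ[X]) = 3 := by
      rw [show (2 * 1 + 1 : ℝ) = 3 by norm_num]; rfl
    have e2 : (C ((n : ℝ) * (n + 2 * 1)) : ℝ[X]) = n * (n + 2) := by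
      simp only [mul_one, map_mul, map_add, map_natCast, map_ofNat]
    rw [e3, e2]
    push_cast
    ring
  · have := congrArg (aeval z) hq
    simp only [Chebyshev.aeval_U, map_mul, map_pow, aeval_X, expand_aeval] at this
    exact this

lemma T_solution {n m ε : ℕ} (hε : ε = 0 ∨ ε = 1) (hn : n = 2 * m + ε) :
    ∃ q, HODE m (1 / 2 + ε) (0 + 1 / 2) q ∧ ∀ z : ℂ,
      (Chebyshev.T ℂ n).eval z = z ^ ε * aeval (z ^ 2) q := by
  obtain ⟨q, hq⟩ := parity' (f := fun n : ℕ => Chebyshev.T ℝ n) (a := 1) (by simp)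
    (by simp [Chebyshev.T_one]) (fun n => by
      have := Chebyshev.T_add_two ℝ n
      push_cast
      exact this) hε hn
  refine ⟨q, transfer hε hn hq ?_, fun z => ?_⟩
  · have := Chebyshev.one_sub_X_sq_mul_derivative_derivative_T_eq_poly_in_T (R := ℝ) n
    simp only [Function.iterate_succ, Function.iterate_zero, Function.comp_apply, id] at this
    rw [this]
    have e3 : (C (2 * 0 + 1 : ℝ) : ℝ[X]) = 1 := by simp
    have e2 : (C ((n : ℝ) * (n + 2 * 0)) : ℝ[X]) = n * n := by
      simp only [mul_zero, add_zero, map_mul, map_natCast]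
    rw [e3, e2]
    push_cast
    ring
  · have := congrArg (aeval z) hq
    simp only [Chebyshev.aeval_T, map_mul, map_pow, aeval_X, expand_aeval] at this
    exact this

lemma geg_solution {n m ε : ℕ} (hε : ε = 0 ∨ ε = 1) (hn : n = 2 * m + ε) {lam : ℝ}
    (hl : 0 < lam) :
    ∃ q, HODE m (1 / 2 + ε) (lam + 1 / 2) q ∧ ∀ z : ℂ,
      gegenbauerC lam n z = z ^ ε * aeval (z ^ 2) q := by
  let a : ℕ → ℝ := fun i => (-1) ^ (m - i) * (Real.Gamma ((m : ℝ) + i + ε + lam) /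
    (Real.Gamma lam * (Nat.factorial (m - i)) * (Nat.factorial (2 * i + ε)))) * 2 ^ (2 * i + ε)
  refine ⟨∑ i ∈ Finset.range (m + 1), C (a i) * X ^ i, ?_, fun z => ?_⟩
  · rw [hode_coeff]
    intro k
    have hco : ∀ k, (∑ i ∈ Finset.range (m + 1), C (a i) * X ^ i).coeff k =
        if k ≤ m then a k else 0 := by
      intro k
      simp [coeff_C_mul, coeff_X_pow]
    rw [hco, hco]
    rcases lt_trichotomy k m with h | h | h
    · rw [if_pos (by omega), if_pos (by omega)]
      obtain ⟨j, rfl⟩ : ∃ j, m = k + 1 + j := ⟨m - (k + 1), by omega⟩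
      simp only [a]
      rw [show k + 1 + j - (k + 1) = j by omega, show k + 1 + j - k = j + 1 by omega]
      have hG : Real.Gamma (((k + 1 + j : ℕ) : ℝ) + ((k + 1 : ℕ) : ℝ) + ε + lam) =
          (((k + 1 + j : ℕ) : ℝ) + k + ε + lam) *
            Real.Gamma (((k + 1 + j : ℕ) : ℝ) + k + ε + lam) := by
        rw [← Real.Gamma_add_one (by positivity)]
        congr 1
        push_cast
        ring
      rw [hG]
      have hGl : Real.Gamma lam ≠ 0 := (Real.Gamma_pos_of_pos hl).ne'
      generalize Real.Gamma (((k + 1 + j : ℕ) : ℝ) + k + ε + lam) = G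
      rw [show 2 * (k + 1) + ε = (2 * k + ε + 1) + 1 by ring]
      simp only [Nat.factorial_succ, pow_succ]
      have f1 : ((Nat.factorial j : ℕ) : ℝ) ≠ 0 := by positivity
      have f2 : ((Nat.factorial (2 * k + ε) : ℕ) : ℝ) ≠ 0 := by positivity
      push_cast
      rcases hε with rfl | rfl
      · push_cast
        field_simp
        ring
      · push_cast
        field_simp
        ring
    · subst h
      simp
    · rw [if_neg (by omega), if_neg (by omega)]
      simp
  · have hm : n / 2 = m := by rcases hε with rfl | rfl <;> omega
    unfold gegenbauerC
    rw [hm, map_sum, Finset.mul_sum, ← Finset.sum_range_reflect]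
    refine Finset.sum_congr rfl fun i hi => ?_
    have hi' : i ≤ m := Nat.lt_succ_iff.mp (Finset.mem_range.mp hi)
    rw [show m + 1 - 1 - i = m - i by omega, show n - 2 * (m - i) = 2 * i + ε by omega]
    have : (n : ℝ) - ((m - i : ℕ) : ℝ) + lam = (m : ℝ) + i + ε + lam := by
      rw [hn, Nat.cast_sub hi']
      push_cast
      ring
    rw [this]
    simp only [a, map_mul, aeval_C, map_pow, aeval_X, Complex.coe_algebraMap, Complex.ofReal_mul,
      Complex.ofReal_pow, Complex.ofReal_neg, Complex.ofReal_one, Complex.ofReal_ofNat]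
    ring

lemma U_joukowski {u : ℂ} (hu : u ≠ 0) (n : ℕ) :
    (Chebyshev.U ℂ n).eval ((u + u⁻¹) / 2) * (u - u⁻¹) = u ^ (n + 1) - (u⁻¹) ^ (n + 1) := by
  have h1 : u * u⁻¹ = 1 := mul_inv_cancel₀ hu
  generalize u⁻¹ = v at *
  induction n using Nat.twoStepInduction with
  | zero => simp
  | one => simp [Chebyshev.U_one]; ring
  | more n ih1 ih2 =>
    have := Chebyshev.U_add_two ℂ n
    push_cast at ih2 ⊢
    rw [this]
    simp only [eval_sub, eval_mul, eval_X, eval_ofNat]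
    linear_combination (u + v) * ih2 - ih1 + (u ^ (n + 1) - v ^ (n + 1)) * h1

lemma T_joukowski {u : ℂ} (hu : u ≠ 0) (n : ℕ) :
    (Chebyshev.T ℂ n).eval ((u + u⁻¹) / 2) * 2 = u ^ n + (u⁻¹) ^ n := by
  have h1 : u * u⁻¹ = 1 := mul_inv_cancel₀ hu
  generalize u⁻¹ = v at *
  induction n using Nat.twoStepInduction with
  | zero => simp; norm_num
  | one => simp
  | more n ih1 ih2 =>
    have := Chebyshev.T_add_two ℂ n
    push_cast at ih2 ⊢
    rw [this]
    simp only [eval_sub, eval_mul, eval_X, eval_ofNat]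
    linear_combination (u + v) * ih2 - ih1 + (u ^ n + v ^ n) * h1

lemma cos_odd_bound (θ : ℝ) (k : ℕ) :
    |Real.cos ((2 * k + 1 : ℕ) * θ)| ≤ (2 * k + 1) * |Real.cos θ| := by
  induction k with
  | zero => simp
  | succ k ih =>
    have e : ((2 * (k + 1) + 1 : ℕ) : ℝ) * θ = (2 * k + 1 : ℕ) * θ + 2 * θ := by
      push_cast; ring
    rw [e, Real.cos_add, Real.sin_two_mul]
    set α := ((2 * k + 1 : ℕ) : ℝ) * θ
    have h1 : |Real.cos α * Real.cos (2 * θ)| ≤ |Real.cos α| := by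
      rw [abs_mul]
      exact mul_le_of_le_one_right (abs_nonneg _) (Real.abs_cos_le_one _)
    have h2 : |Real.sin α * (2 * Real.sin θ * Real.cos θ)| ≤ 2 * |Real.cos θ| := by
      rw [abs_mul, abs_mul, abs_mul, abs_two]
      have a1 := Real.abs_sin_le_one α
      have a2 := Real.abs_sin_le_one θ
      have a3 : |Real.sin α| * |Real.sin θ| ≤ 1 :=
        mul_le_one₀ a1 (abs_nonneg _) a2
      have := mul_le_mul_of_nonneg_right a3 (abs_nonneg (Real.cos θ))
      linarith
    have h3 := abs_sub (Real.cos α * Real.cos (2 * θ))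
      (Real.sin α * (2 * Real.sin θ * Real.cos θ))
    push_cast
    linarith

lemma P_bound {ρ r : ℝ} (hρ : 0 < ρ) (hr : 0 < r) (hρr : ρ * r = 1) (ha : 4 ≤ ρ ^ 2 + r ^ 2)
    (k : ℕ) : (2 * k + 1) * (ρ + r) ≤ ρ ^ (2 * k + 1) + r ^ (2 * k + 1) := by
  have h3 : ∀ k : ℕ, 3 * (ρ ^ (2 * k + 1) + r ^ (2 * k + 1)) ≤
      ρ ^ (2 * k + 3) + r ^ (2 * k + 3) := by
    intro k
    induction k with
    | zero =>
      have e : ρ ^ 3 + r ^ 3 = (ρ ^ 2 + r ^ 2 - 1) * (ρ + r) := by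
        linear_combination (-ρ - r) * hρr
      simp only [mul_zero, zero_add, pow_one]
      rw [e]
      exact mul_le_mul_of_nonneg_right (by linarith) (by linarith)
    | succ k ih =>
      have e : ρ ^ (2 * (k + 1) + 3) + r ^ (2 * (k + 1) + 3) =
          (ρ ^ 2 + r ^ 2) * (ρ ^ (2 * k + 3) + r ^ (2 * k + 3))
            - (ρ ^ (2 * k + 1) + r ^ (2 * k + 1)) := by
        have e2 : (ρ * r) ^ 2 = 1 := by rw [hρr, one_pow]
        linear_combination (-(ρ ^ (2 * k + 1) + r ^ (2 * k + 1))) * e2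
      rw [e, show 2 * (k + 1) + 1 = 2 * k + 3 by ring]
      have p1 : 0 < ρ ^ (2 * k + 1) + r ^ (2 * k + 1) := by positivity
      have p3 : 0 < ρ ^ (2 * k + 3) + r ^ (2 * k + 3) := by positivity
      nlinarith
  induction k with
  | zero => simp
  | succ k ih =>
    have := h3 k
    rw [show 2 * (k + 1) + 1 = 2 * k + 3 by ring]
    push_cast
    have : (0 : ℝ) ≤ k := Nat.cast_nonneg k
    have hp : 0 ≤ (k : ℝ) * (ρ + r) := by positivity
    nlinarith

lemma norm_sq_sub {ρ : ℝ} (hρ : 0 < ρ) {u : ℂ} (hu : ‖u‖ = ρ) (N : ℕ) :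
    ‖u ^ N - (u⁻¹) ^ N‖ ^ 2 =
      (ρ ^ N + (ρ⁻¹) ^ N) ^ 2 - 4 * Real.cos (N * Complex.arg u) ^ 2 := by
  have hne : (ρ : ℂ) ≠ 0 := by exact_mod_cast hρ.ne'
  set θ := Complex.arg u
  have hue : u = ρ * (Complex.cos θ + Complex.sin θ * Complex.I) := by
    have := Complex.norm_mul_cos_add_sin_mul_I u
    rw [hu] at this
    exact this.symm
  have hcsC := Complex.sin_sq_add_cos_sq (θ : ℂ)
  have hui : u⁻¹ = (ρ⁻¹ : ℝ) * (Complex.cos (-θ : ℂ) + Complex.sin (-θ : ℂ) * Complex.I) := by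
    apply inv_eq_of_mul_eq_one_right
    rw [hue, Complex.cos_neg, Complex.sin_neg]
    push_cast
    field_simp
    linear_combination hcsC - (Complex.sin θ : ℂ) ^ 2 * Complex.I_sq
  have h1 : ρ ^ N * (ρ⁻¹) ^ N = 1 := by rw [← mul_pow, mul_inv_cancel₀ hρ.ne', one_pow]
  have hz : u ^ N - (u⁻¹) ^ N =
      (((ρ ^ N - (ρ⁻¹) ^ N) * Real.cos (N * θ) : ℝ) : ℂ) +
      (((ρ ^ N + (ρ⁻¹) ^ N) * Real.sin (N * θ) : ℝ) : ℂ) * Complex.I := by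
    rw [hui, hue, mul_pow, mul_pow, Complex.cos_add_sin_mul_I_pow, Complex.cos_add_sin_mul_I_pow,
      mul_neg, Complex.cos_neg, Complex.sin_neg]
    push_cast
    ring
  rw [hz, ← Complex.normSq_eq_norm_sq, Complex.normSq_add_mul_I]
  have hs := Real.sin_sq_add_cos_sq (N * θ)
  linear_combination (ρ ^ N + (ρ⁻¹) ^ N) ^ 2 * hs - 4 * Real.cos (N * θ) ^ 2 * h1

lemma inv_pow_lt {ρ : ℝ} (hρ : 1 < ρ) {N : ℕ} (hN : N ≠ 0) : (ρ⁻¹) ^ N < ρ ^ N := by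
  have hr1 : ρ⁻¹ < 1 := inv_lt_one_of_one_lt₀ hρ
  exact pow_lt_pow_left₀ (by linarith) (by positivity) hN

lemma minor_point (ρ : ℝ) :
    Complex.I * (((ρ - ρ⁻¹) / 2 : ℝ) : ℂ) =
      (Complex.I * ρ + (Complex.I * ρ)⁻¹) / 2 := by
  rw [mul_inv, Complex.inv_I]
  push_cast
  ring

lemma base_U {ρ : ℝ} (hρ : 1 < ρ) (ha : 4 ≤ ρ ^ 2 + (ρ⁻¹) ^ 2) {u : ℂ} (hu : ‖u‖ = ρ) (n : ℕ) :
    (Chebyshev.U ℂ n).eval ((u + u⁻¹) / 2) ≠ 0 ∧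
    ‖(Chebyshev.U ℂ n).eval (Complex.I * (((ρ - ρ⁻¹) / 2 : ℝ) : ℂ))‖ ≤
      ‖(Chebyshev.U ℂ n).eval ((u + u⁻¹) / 2)‖ := by
  have hρ0 : 0 < ρ := by linarith
  have hr0 : 0 < ρ⁻¹ := by positivity
  have hu0 : u ≠ 0 := by intro h; rw [h] at hu; simp at hu; linarith
  set v : ℂ := Complex.I * ρ with hv
  have hvn : ‖v‖ = ρ := by simp [hv, abs_of_pos hρ0]
  have hv0 : v ≠ 0 := by intro h; rw [h] at hvn; simp at hvn; linarith
  rw [minor_point, ← hv]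
  have ju := congrArg norm (U_joukowski hu0 n)
  have jv := congrArg norm (U_joukowski hv0 n)
  rw [norm_mul] at ju jv
  have hvd : ‖v - v⁻¹‖ = ρ + ρ⁻¹ := by
    have : v - v⁻¹ = Complex.I * ((ρ + ρ⁻¹ : ℝ) : ℂ) := by
      rw [hv, mul_inv, Complex.inv_I]; push_cast; ring
    rw [this, norm_mul, Complex.norm_I, one_mul, Complex.norm_real, Real.norm_eq_abs,
      abs_of_pos (by positivity)]
  rw [hvd] at jv
  have hlow : ρ ^ (n + 1) - (ρ⁻¹) ^ (n + 1) ≤ ‖u ^ (n + 1) - (u⁻¹) ^ (n + 1)‖ := by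
    have := norm_sub_norm_le (u ^ (n + 1)) ((u⁻¹) ^ (n + 1))
    simpa [norm_pow, norm_inv, hu] using this
  have hpos := inv_pow_lt hρ (Nat.succ_ne_zero n)
  refine ⟨?_, ?_⟩
  · intro h0
    rw [h0, norm_zero, zero_mul] at ju
    simp only [Nat.succ_eq_add_one] at hpos
    linarith
  set a := ‖(Chebyshev.U ℂ n).eval ((u + u⁻¹) / 2)‖ with ha_def
  set b := ‖(Chebyshev.U ℂ n).eval ((v + v⁻¹) / 2)‖ with hb_def
  have ha0 : 0 ≤ a := norm_nonneg _
  have hp1 : 0 < ρ + ρ⁻¹ := by positivity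
  apply le_of_mul_le_mul_right _ hp1
  rw [jv]
  rcases Nat.even_or_odd (n + 1) with he | ho
  · have e : v ^ (n + 1) - (v⁻¹) ^ (n + 1) =
        Complex.I ^ (n + 1) * ((ρ ^ (n + 1) - (ρ⁻¹) ^ (n + 1) : ℝ) : ℂ) := by
      rw [hv, mul_inv, Complex.inv_I, mul_pow, mul_pow, he.neg_pow]
      push_cast
      ring
    rw [e, norm_mul, norm_pow, Complex.norm_I, one_pow, one_mul, Complex.norm_real,
      Real.norm_eq_abs, abs_of_pos (by simpa using hpos)]
    have : ‖u - u⁻¹‖ ≤ ρ + ρ⁻¹ := by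
      have := norm_sub_le u u⁻¹
      simpa [norm_inv, hu] using this
    have := mul_le_mul_of_nonneg_left this ha0
    linarith
  · obtain ⟨k, hk⟩ := ho
    have hle : ‖v ^ (n + 1) - (v⁻¹) ^ (n + 1)‖ ≤ ρ ^ (n + 1) + (ρ⁻¹) ^ (n + 1) := by
      have := norm_sub_le (v ^ (n + 1)) ((v⁻¹) ^ (n + 1))
      simpa [norm_pow, norm_inv, hvn] using this
    refine hle.trans ?_
    have s1 := norm_sq_sub hρ0 hu 1
    have sN := norm_sq_sub hρ0 hu (n + 1)
    simp only [pow_one, Nat.cast_one, one_mul] at s1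
    rw [← ju, mul_pow, s1] at sN
    have hc := cos_odd_bound (Complex.arg u) k
    have hP := P_bound hρ0 hr0 (mul_inv_cancel₀ hρ0.ne') ha k
    rw [← hk] at hc hP
    have hcos1 : Real.cos (Complex.arg u) ^ 2 ≤ 1 := Real.cos_sq_le_one _
    set PN := ρ ^ (n + 1) + (ρ⁻¹) ^ (n + 1)
    set P1 := ρ + ρ⁻¹
    set cN := Real.cos (((n + 1 : ℕ) : ℝ) * Complex.arg u)
    set c1 := Real.cos (Complex.arg u)
    have hP1 : 6 ≤ P1 ^ 2 := by
      have : ρ * ρ⁻¹ = 1 := mul_inv_cancel₀ hρ0.ne'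
      simp only [P1]
      nlinarith
    have hD : 0 < P1 ^ 2 - 4 * c1 ^ 2 := by linarith
    have hK : P1 * |cN| ≤ PN * |c1| := by
      calc P1 * |cN| ≤ P1 * ((2 * k + 1) * |c1|) := mul_le_mul_of_nonneg_left hc hp1.le
        _ = ((2 * k + 1) * P1) * |c1| := by ring
        _ ≤ PN * |c1| := mul_le_mul_of_nonneg_right hP (abs_nonneg _)
    have hK2 : P1 ^ 2 * cN ^ 2 ≤ PN ^ 2 * c1 ^ 2 := by
      have := pow_le_pow_left₀ (by positivity) hK 2
      rwa [mul_pow, mul_pow, sq_abs, sq_abs] at this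
    apply le_of_sq_le_sq _ (by positivity)
    apply le_of_mul_le_mul_right _ hD
    rw [mul_pow]
    have : a ^ 2 * P1 ^ 2 * (P1 ^ 2 - 4 * c1 ^ 2) = P1 ^ 2 * (PN ^ 2 - 4 * cN ^ 2) := by
      rw [← sN]; ring
    rw [this]
    linarith

lemma base_T {ρ : ℝ} (hρ : 1 < ρ) {u : ℂ} (hu : ‖u‖ = ρ) {n : ℕ} (hn : Odd n) :
    (Chebyshev.T ℂ n).eval ((u + u⁻¹) / 2) ≠ 0 ∧
    ‖(Chebyshev.T ℂ n).eval (Complex.I * (((ρ - ρ⁻¹) / 2 : ℝ) : ℂ))‖ ≤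
      ‖(Chebyshev.T ℂ n).eval ((u + u⁻¹) / 2)‖ := by
  have hρ0 : 0 < ρ := by linarith
  have hr0 : 0 < ρ⁻¹ := by positivity
  have hu0 : u ≠ 0 := by intro h; rw [h] at hu; simp at hu; linarith
  set v : ℂ := Complex.I * ρ with hv
  have hvn : ‖v‖ = ρ := by simp [hv, abs_of_pos hρ0]
  have hv0 : v ≠ 0 := by intro h; rw [h] at hvn; simp at hvn; linarith
  rw [minor_point, ← hv]
  have ju := congrArg norm (T_joukowski hu0 n)
  have jv := congrArg norm (T_joukowski hv0 n)
  rw [norm_mul, Complex.norm_two] at ju jv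
  have hlow : ρ ^ n - (ρ⁻¹) ^ n ≤ ‖u ^ n + (u⁻¹) ^ n‖ := by
    have := norm_sub_norm_le (u ^ n) (-(u⁻¹) ^ n)
    simpa [norm_pow, norm_inv, hu] using this
  have hpos := inv_pow_lt hρ hn.pos.ne'
  have e : v ^ n + (v⁻¹) ^ n = Complex.I ^ n * ((ρ ^ n - (ρ⁻¹) ^ n : ℝ) : ℂ) := by
    rw [hv, mul_inv, Complex.inv_I, mul_pow, mul_pow, hn.neg_pow]
    push_cast
    ring
  rw [e, norm_mul (Complex.I ^ n), norm_pow, Complex.norm_I, one_pow, one_mul, Complex.norm_real,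
    Real.norm_eq_abs, abs_of_pos (by linarith)] at jv
  refine ⟨?_, by linarith⟩
  intro h0
  rw [h0, norm_zero, zero_mul] at ju
  linarith

lemma finish {n m ε : ℕ} (hε : ε = 0 ∨ ε = 1) (hn : n = 2 * m + ε) {l lam : ℝ}
    (hl : 0 ≤ l) (hlam0 : 0 < lam) (hlam : l ≤ lam) {F : ℂ → ℂ}
    (hF : ∃ q, HODE m (1 / 2 + ε) (l + 1 / 2) q ∧ ∀ z : ℂ, F z = z ^ ε * aeval (z ^ 2) q)
    {ρ : ℝ} (hρ : 1 < ρ) (ha : 4 ≤ ρ ^ 2 + (ρ⁻¹) ^ 2) {u : ℂ} (hu : ‖u‖ = ρ)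
    (hb : F ((u + u⁻¹) / 2) ≠ 0 ∧ ‖F (Complex.I * (((ρ - ρ⁻¹) / 2 : ℝ) : ℂ))‖ ≤
      ‖F ((u + u⁻¹) / 2)‖) :
    ‖gegenbauerC lam n (Complex.I * (((ρ - ρ⁻¹) / 2 : ℝ) : ℂ))‖ ≤
      ‖gegenbauerC lam n ((u + u⁻¹) / 2)‖ := by
  obtain ⟨q, hq, hFq⟩ := hF
  obtain ⟨q', hq', hG⟩ := geg_solution hε hn hlam0
  have hr1 : ρ⁻¹ < 1 := inv_lt_one_of_one_lt₀ hρ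
  have hy : 0 < (ρ - ρ⁻¹) / 2 := by linarith
  have hsq : (Complex.I * (((ρ - ρ⁻¹) / 2 : ℝ) : ℂ)) ^ 2 = ((-((ρ - ρ⁻¹) / 2) ^ 2 : ℝ) : ℂ) := by
    rw [mul_pow, Complex.I_sq]; push_cast; ring
  have hnorm : ‖Complex.I * (((ρ - ρ⁻¹) / 2 : ℝ) : ℂ)‖ = (ρ - ρ⁻¹) / 2 := by
    rw [norm_mul, Complex.norm_I, one_mul, Complex.norm_real, Real.norm_eq_abs, abs_of_pos hy]
  rw [hFq, hFq, norm_mul, norm_mul, norm_pow, norm_pow, hsq, hnorm] at hb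
  rw [hG, hG, norm_mul, norm_mul, norm_pow, norm_pow, hsq, hnorm]
  have key := main_compare (ε := ε) (by positivity) (by linarith) (by linarith) hq hq' hρ ha hu
    (right_ne_zero_of_mul hb.1) (by linarith [hb.2])
  linarith

end GegMin

/-- for `n ≥ 2`, `ρ ≥ (√2 + √6)/2`, and `λ > 1` or (`0 < λ < 1` and `n` odd),
the minimum of `|C_n^λ|` over `E_ρ` is attained at the two endpoints `± i(ρ - ρ⁻¹)/2` of the
minor axis. -/
theorem gegenbauer_min_at_minor_axis
    (n : ℕ) (hn : 2 ≤ n) (ρ : ℝ) (hρ : (Real.sqrt 2 + Real.sqrt 6) / 2 ≤ ρ)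
    (lam : ℝ) (hlam : 1 < lam ∨ (0 < lam ∧ lam < 1 ∧ Odd n)) :
    (∀ z ∈ bernsteinEllipse ρ,
      ‖gegenbauerC lam n (Complex.I * (((ρ - ρ⁻¹) / 2 : ℝ) : ℂ))‖ ≤
        ‖gegenbauerC lam n z‖) ∧
    ‖gegenbauerC lam n (Complex.I * (((ρ - ρ⁻¹) / 2 : ℝ) : ℂ))‖ =
      ‖gegenbauerC lam n (-(Complex.I * (((ρ - ρ⁻¹) / 2 : ℝ) : ℂ)))‖ := by
  have hl0 : 0 < lam := by rcases hlam with h | h <;> linarith [h]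
  obtain ⟨m, ε, hε, hnm⟩ : ∃ m ε : ℕ, (ε = 0 ∨ ε = 1) ∧ n = 2 * m + ε :=
    ⟨n / 2, n % 2, by omega, by omega⟩
  have s2 : (1 : ℝ) < Real.sqrt 2 := by
    rw [Real.lt_sqrt (by norm_num)]; norm_num
  have s6 : (2 : ℝ) < Real.sqrt 6 := by
    rw [Real.lt_sqrt (by norm_num)]; norm_num
  have hρ1 : 1 < ρ := by linarith
  have ha : 4 ≤ ρ ^ 2 + (ρ⁻¹) ^ 2 := by
    have q2 : Real.sqrt 2 ^ 2 = 2 := Real.sq_sqrt (by norm_num)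
    have q6 : Real.sqrt 6 ^ 2 = 6 := Real.sq_sqrt (by norm_num)
    have h1 : ((Real.sqrt 2 + Real.sqrt 6) / 2) ^ 2 ≤ ρ ^ 2 :=
      pow_le_pow_left₀ (by positivity) hρ 2
    set p := Real.sqrt 2 * Real.sqrt 6 with hp
    have hp2 : p ^ 2 = 12 := by rw [hp, mul_pow, q2, q6]; norm_num
    have hp0 : 0 ≤ p := by positivity
    have h2 : 2 + p / 2 ≤ ρ ^ 2 := by nlinarith
    have h3 : 0 ≤ (ρ ^ 2) ^ 2 - 4 * ρ ^ 2 + 1 := by nlinarith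
    have hpos : 0 < ρ ^ 2 := by positivity
    have : ρ ^ 2 + (ρ⁻¹) ^ 2 - 4 = ((ρ ^ 2) ^ 2 - 4 * ρ ^ 2 + 1) / ρ ^ 2 := by
      field_simp
      ring
    have h4 := div_nonneg h3 hpos.le
    linarith
  refine ⟨?_, ?_⟩
  · rintro z ⟨u, hu, rfl⟩
    rcases hlam with h | ⟨_, _, hodd⟩
    · exact GegMin.finish hε hnm (zero_le_one) hl0 h.le (GegMin.U_solution hε hnm) hρ1 ha hu
        (GegMin.base_U hρ1 ha hu n)
    · exact GegMin.finish hε hnm le_rfl hl0 hl0.le (GegMin.T_solution hε hnm) hρ1 ha hu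
        (GegMin.base_T hρ1 hu hodd)
  · obtain ⟨q, _, hG⟩ := GegMin.geg_solution hε hnm hl0
    rw [hG, hG, norm_mul, norm_mul, norm_pow, norm_pow, norm_neg, neg_sq]
end

section
/- Let α, β > −1 and let u be a complex number with |u| = ρ > 1, and set z = (u + u⁻¹)/2. Then lim_{n→∞} [√(nπ) · P_n^{(α,β)}(z) / (2^{α+β} u^n)] = (1 − u⁻¹)^{−α−1/2} (1 + u⁻¹)^{−β−1/2}, where the complex powers are taken with the principal branch (note that 1 ± u⁻¹ lie in the right half-plane since |u⁻¹| < 1). -/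
open Finset

open Polynomial in
theorem jl_term (a b : ℝ) (k m : ℕ) (S1 S2 : ℝ[X]) 
  (h1 : S1 = (1 - X)^(2*(k-1)) * (1+X)^(2*m)) (h2 : S2 = (1 - X)^(2*k) * (1+X)^(2*(m-1))) (T : ℝ[X])
  (hT : T = (1 - X)^(2*k) * (1+X)^(2*m)) :
  (1 - (X:ℝ[X])^2) * (X^2 * derivative (derivative T) - (2*((k:ℝ[X])+(m:ℝ[X])) - 1) * X * derivative T - ((k:ℝ[X])+(m:ℝ[X])) * C (a+b+1) * T)
   + (C (a+b+1) * (1 + X^2) + 2 * C (a - b) * X) * (((k:ℝ[X])+(m:ℝ[X])) * T - X * derivative T)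
   = (1 - X^2) * (4 * X) * (C (k * (k + a)) * S1 - C (m * (m + b)) * S2) := by
  subst h1 h2 hT
  rcases k with _ | k <;> rcases m with _ | m
  all_goals
    simp only [mul_add, mul_one, derivative_mul, derivative_pow, derivative_one, derivative_X, map_add, map_mul, map_sub, map_natCast, Nat.cast_add, Nat.cast_mul, Nat.add_sub_cancel, derivative_natCast, Nat.cast_one, Nat.cast_zero,Nat.cast_ofNat, map_zero, map_one, mul_zero, pow_zero, zero_mul, add_zero, zero_add, sub_zero, zero_sub, map_ofNat, derivative_ofNat, derivative_neg,Nat.add_sub_cancel, show ∀ k:ℕ, 2*k+2-1 = 2*k+1 from fun k => by omega]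
  all_goals try ring

theorem jl_gbinom_succ (a : ℝ) (m : ℕ) : gbinom a (m+1) * (m+1) = gbinom a m * (a - m) := by
  unfold gbinom
  rw [Finset.prod_range_succ, Nat.factorial_succ]
  push_cast
  have : (m.factorial : ℝ) ≠ 0 := by positivity
  have : ((m:ℝ) + 1) ≠ 0 := by positivity
  field_simp

theorem jl_gbinom_choose (a : ℝ) (m : ℕ) : gbinom a m = Ring.choose a m := by
  induction m with
  | zero => simp [gbinom]
  | succ m ih =>
    have h := jl_gbinom_succ a m
    have h2 := Ring.choose_smul_choose a (Nat.le_succ m)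
    simp [Nat.choose_succ_self_right] at h2
    have : ((m:ℝ) + 1) ≠ 0 := by positivity
    apply mul_right_cancel₀ this
    rw [h, ih, ← h2]; ring

/-- product coefficient in the Jacobi sum -/
noncomputable def jlG (α β : ℝ) (n k : ℕ) : ℝ :=
  gbinom ((n : ℝ) + α) (n - k) * gbinom ((n : ℝ) + β) k

theorem jl_G_rec (α β : ℝ) (n k : ℕ) (hk : k ≤ n) :
    jlG α β n (k+1) * ((k+1) * (k+1+α)) * (if k = n then 0 else 1) =
      jlG α β n k * ((n-k : ℕ) * ((n-k : ℕ) + β)) := by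
  obtain ⟨m, rfl⟩ := Nat.exists_eq_add_of_le hk
  rcases m with _ | m
  · simp
  · have h1 := jl_gbinom_succ (((k + (m+1) : ℕ) : ℝ) + α) m
    have h2 := jl_gbinom_succ (((k + (m+1) : ℕ) : ℝ) + β) k
    unfold jlG
    rw [show k + (m+1) - (k+1) = m by omega, show k + (m+1) - k = m+1 by omega]
    rw [if_neg (by omega)]
    push_cast at *
    linear_combination (norm := skip) (gbinom ((k:ℝ) + (m+1) + α) m) * ((k:ℝ)+1+α) * h2 -
      (gbinom ((k:ℝ) + (m+1) + β) k) * (m+1+β) * h1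
    ring

theorem jl_vander (α β : ℝ) (n : ℕ) :
    ∑ k ∈ Finset.range (n+1), jlG α β n k = gbinom (2 * n + α + β) n := by
  rw [jl_gbinom_choose, show (2 * n + α + β : ℝ) = ((n:ℝ)+β) + (n+α) by ring,
    Ring.add_choose_eq n (Commute.all _ _), Finset.Nat.sum_antidiagonal_eq_sum_range_succ_mk]
  refine Finset.sum_congr rfl fun k _ => ?_
  simp only [jlG, jl_gbinom_choose]
  ring

theorem jl_gamma (x : ℝ) (_hx : 0 < x) : 
    Filter.Tendsto (fun n : ℕ => ((n:ℝ)^x * n.factorial / ∏ j ∈ Finset.range (n+1), (x + j)) )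
      Filter.atTop (nhds (Real.Gamma x)) := Real.GammaSeq_tendsto_Gamma x

theorem jl_central : Filter.Tendsto (fun n : ℕ => Real.sqrt (n * Real.pi) * ((2*n).factorial / (n.factorial : ℝ)^2) / 4^n)
      Filter.atTop (nhds 1) := by
  have h := jl_gamma (1/2) (by norm_num)
  rw [Real.Gamma_one_half_eq] at h
  have key : ∀ n : ℕ, ∏ j ∈ Finset.range (n+1), ((1/2:ℝ) + j) = (n+1/2) * ((2*n).factorial / n.factorial / 4^n) := by
    intro n
    induction n with
    | zero => simp
    | succ n ih => 
      rw [Finset.prod_range_succ, ih, show 2*(n+1) = 2*n+1+1 by ring, Nat.factorial_succ, Nat.factorial_succ, Nat.factorial_succ]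
      push_cast
      field_simp
      ring
  have h2 : Filter.Tendsto (fun n : ℕ => (n:ℝ) / (n + 1/2)) Filter.atTop (nhds 1) := 
    tendsto_natCast_div_add_atTop (1/2 : ℝ)
  have hpi : Real.sqrt Real.pi ≠ 0 := by positivity
  have h3 := ((h.inv₀ hpi).mul h2).const_mul (Real.sqrt Real.pi)
  rw [mul_one, mul_inv_cancel₀ hpi] at h3
  refine h3.congr' ?_
  filter_upwards [Filter.eventually_gt_atTop 0] with n hn
  have hn' : (0:ℝ) < n := by exact_mod_cast hn
  rw [key, Real.sqrt_mul hn'.le, ← Real.sqrt_eq_rpow]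
  have h5 : Real.sqrt n ^ 2 = n := Real.sq_sqrt hn'.le
  have h6 : Real.sqrt n ≠ 0 := by positivity
  have h7 : (n:ℝ) + 1/2 ≠ 0 := by positivity
  have h8 : ((n.factorial : ℕ):ℝ) ≠ 0 := by positivity
  have h9 : (((2*n).factorial : ℕ):ℝ) ≠ 0 := by positivity
  have h10 : (2:ℝ) * n + 1 ≠ 0 := by positivity
  field_simp
  rw [h5]

theorem jl_prod (s : ℝ) (n : ℕ) :
    (∏ i ∈ Finset.range n, (2 * (n:ℝ) + (s - 1) - i)) * ((2*n+s) * (2*n+s+1)) *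
      ∏ j ∈ Finset.range (n+1), (s + 1 + j) =
    (n+s) * (n+s+1) * ∏ j ∈ Finset.range (2*n+1), (s+1+j) := by
  have e1 : (∏ i ∈ Finset.range n, (2 * (n:ℝ) + (s - 1) - i)) =
      ∏ i ∈ Finset.range n, ((n:ℝ) + s + i) := by
    rw [← Finset.prod_range_reflect]
    refine Finset.prod_congr rfl fun i hi => ?_
    have hi' := Finset.mem_range.1 hi
    rw [Nat.sub_sub, Nat.cast_sub (by omega)]
    push_cast; ring
  have e2 : ∏ j ∈ Finset.range (2*n+1), (s+1+(j:ℝ)) =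
      (∏ j ∈ Finset.range (n+1), (s+1+(j:ℝ))) * ∏ i ∈ Finset.range n, ((n:ℝ)+s+((i+1+1:ℕ):ℝ)) := by
    rw [show 2*n+1 = n+1+n by ring, Finset.prod_range_add]
    congr 1
    refine Finset.prod_congr rfl fun i hi => ?_
    push_cast; ring
  have e3 := Finset.prod_range_succ' (fun i : ℕ => (n:ℝ)+s+(i:ℝ)) (n+1)
  rw [Finset.prod_range_succ' (fun i : ℕ => (n:ℝ)+s+((i+1:ℕ):ℝ)) n, Finset.prod_range_succ,
    Finset.prod_range_succ] at e3
  rw [e1, e2]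
  push_cast at *
  linear_combination (∏ j ∈ Finset.range (n+1), (s+1+(j:ℝ))) * e3

theorem jl_c0 (α β : ℝ) (hα : -1 < α) (hβ : -1 < β) :
    Filter.Tendsto (fun n : ℕ => Real.sqrt (n * Real.pi) * gbinom (2 * n + α + β) n / 4^n)
      Filter.atTop (nhds ((2:ℝ)^(α+β))) := by
  obtain ⟨s, hs⟩ : ∃ s, s = α + β + 1 := ⟨_, rfl⟩
  have hs1 : 0 < s + 1 := by linarith
  have hG := jl_gamma (s+1) hs1
  have h2n : Filter.Tendsto (fun n : ℕ => 2 * n) Filter.atTop Filter.atTop :=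
    Filter.tendsto_id.const_mul_atTop' (by norm_num)
  have hG2 := hG.comp h2n
  have hne : Real.Gamma (s+1) ≠ 0 := (Real.Gamma_pos_of_pos hs1).ne'
  have hr := hG.div hG2 hne
  rw [div_self hne] at hr
  have hl : ∀ c : ℝ, Filter.Tendsto (fun n : ℕ => ((n:ℝ) + c) / (2 * n + c)) Filter.atTop (nhds (1/2)) := by
    intro c
    have a1 : Filter.Tendsto (fun n : ℕ => (c / (n:ℝ))) Filter.atTop (nhds 0) :=
      tendsto_const_div_atTop_nhds_zero_nat c
    have := (a1.const_add 1).div (a1.const_add 2) (by norm_num)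
    simp only [add_zero] at this
    refine this.congr' ?_
    filter_upwards [Filter.eventually_gt_atTop 0] with n hn
    have hn' : (0:ℝ) < n := by exact_mod_cast hn
    simp only [Pi.div_apply]
    rw [← mul_div_mul_left _ _ hn'.ne']
    congr 1 <;> field_simp
  have hlim := ((jl_central.mul hr).mul ((hl s).mul (hl (s+1)))).const_mul ((2:ℝ)^(s+1))
  have e : (2:ℝ)^(s+1) * (1 * 1 * (1/2 * (1/2))) = 2 ^ (α+β) := by
    rw [show s + 1 = (α+β) + 2 by rw [hs]; ring, Real.rpow_add (by norm_num)]
    norm_num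
    ring
  rw [e] at hlim
  refine hlim.congr' ?_
  filter_upwards [Filter.eventually_gt_atTop 0] with n hn
  have hn' : (1:ℝ) ≤ n := by exact_mod_cast hn
  have hp := jl_prod s n
  have hP : ∀ m : ℕ, (∏ j ∈ Finset.range m, (s+1+(j:ℝ))) ≠ 0 := fun m =>
    Finset.prod_ne_zero_iff.2 fun j _ => by positivity
  have p1 : (2:ℝ) * n + s ≠ 0 := by nlinarith
  have p2 : (2:ℝ) * n + (s + 1) ≠ 0 := by nlinarith
  have p2' : (2:ℝ) * n + s + 1 ≠ 0 := by nlinarith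
  rw [← add_assoc] at p2
  have p3 := hP (n+1)
  have p4 := hP (2*n+1)
  have h8 : ((n.factorial : ℕ):ℝ) ≠ 0 := by positivity
  have h9 : (((2*n).factorial : ℕ):ℝ) ≠ 0 := by positivity
  have h10 : (n:ℝ)^(s+1) ≠ 0 := by positivity
  have h11 : (2:ℝ)^(s+1) ≠ 0 := by positivity
  simp only [Pi.div_apply, Function.comp_apply, gbinom, ← add_assoc]
  rw [show (2 * (n:ℝ) + α + β) = 2 * n + (s-1) by rw [hs]; ring]
  push_cast
  rw [Real.mul_rpow (by norm_num) (by positivity)]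
  generalize (∏ i ∈ Finset.range n, (2 * (n:ℝ) + (s - 1) - i)) = A at *
  generalize (∏ j ∈ Finset.range (n+1), (s+1+(j:ℝ))) = B at *
  generalize (∏ j ∈ Finset.range (2*n+1), (s+1+(j:ℝ))) = E at *
  have hA : A = (n+s) * (n+s+1) * E / ((2 * n + s) * (2 * n + s + 1) * B) := by
    rw [eq_div_iff (mul_ne_zero (mul_ne_zero p1 p2) p3)]
    linear_combination hp
  rw [hA]
  field_simp

section jlpoly
open Polynomial

noncomputable def jlT (n k : ℕ) : ℝ[X] := (1 - X)^(2*k) * (1+X)^(2*(n-k))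

noncomputable def jlQ (α β : ℝ) (n : ℕ) : ℝ[X] :=
  ∑ k ∈ Finset.range (n+1), C (jlG α β n k) * jlT n k

noncomputable def jlE (α β : ℝ) (n : ℕ) (T : ℝ[X]) : ℝ[X] :=
  (1 - (X:ℝ[X])^2) * (X^2 * derivative (derivative T) - (2*(n:ℝ[X]) - 1) * X * derivative T
      - (n:ℝ[X]) * C (α+β+1) * T)
   + (C (α+β+1) * (1 + X^2) + 2 * C (α - β) * X) * ((n:ℝ[X]) * T - X * derivative T)

theorem jlE_sum (α β : ℝ) (n : ℕ) (s : Finset ℕ) (a : ℕ → ℝ) (f : ℕ → ℝ[X]) :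
    jlE α β n (∑ k ∈ s, C (a k) * f k) = ∑ k ∈ s, C (a k) * jlE α β n (f k) := by
  classical
  induction s using Finset.induction_on with
  | empty => simp [jlE]
  | insert k s hk ih =>
    rw [Finset.sum_insert hk, Finset.sum_insert hk, ← ih]
    simp only [jlE, derivative_add, derivative_mul, derivative_C, zero_mul, zero_add]
    ring

theorem jlE_Q (α β : ℝ) (n : ℕ) : jlE α β n (jlQ α β n) = 0 := by
  rw [jlQ, jlE_sum]
  set F : ℕ → ℝ[X] := fun k => (1 - X^2) * (4 * X) *
    (C (jlG α β n k * (k * (k + α)) * (if k = n + 1 then 0 else 1)) *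
      ((1 - X)^(2*(k-1)) * (1+X)^(2*(n-k)))) with hF
  have h : ∀ k ∈ Finset.range (n+1), C (jlG α β n k) * jlE α β n (jlT n k) = F k - F (k+1) := by
    intro k hk
    have hk' : k ≤ n := by have := Finset.mem_range.1 hk; omega
    have ht := jl_term α β k (n-k) _ _ rfl rfl _ rfl
    have hc : ((k:ℝ[X]) + ((n-k:ℕ):ℝ[X])) = n := by
      rw [← Nat.cast_add]; congr 1; omega
    rw [hc] at ht
    rw [jlE, jlT, ht]
    have hg := jl_G_rec α β n k hk'
    simp only [hF]
    have e1 : (if k + 1 = n + 1 then (0:ℝ) else 1) = if k = n then 0 else 1 := by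
      simp
    rw [if_neg (show ¬ k = n + 1 by omega), e1]
    push_cast
    rw [hg, Nat.sub_sub]
    simp only [mul_one, C_mul]
    ring
  rw [Finset.sum_congr rfl h, Finset.sum_range_sub']
  simp [hF]

theorem jl_coeff_theta (p : ℝ[X]) (k : ℕ) : (X * derivative p).coeff k = k * p.coeff k := by
  cases k with
  | zero => simp
  | succ k => rw [coeff_X_mul, coeff_derivative]; push_cast; ring

theorem jl_E_form (α β : ℝ) (n : ℕ) (Q : ℝ[X]) :
    jlE α β n Q =
      (X * derivative (X * derivative Q) + C (-2 * (n:ℝ) - (α+β+1)) * (X * derivative Q))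
      - X * (X * (X * derivative (X * derivative Q) + C (-2 * (n:ℝ) + (α+β+1)) * (X * derivative Q)
          + C (-2 * n * (α+β+1)) * Q))
      + X * (C (2 * (α - β)) * (C (n:ℝ) * Q - X * derivative Q)) := by
  simp only [jlE, derivative_mul, derivative_X, C_add, C_sub, C_mul, C_neg, map_natCast, map_ofNat]
  ring

theorem jl_rec1 (α β : ℝ) (n : ℕ) :
    (2 * (n:ℝ) - 1 + (α+β+1)) * (jlQ α β n).coeff 1 = 2 * (α - β) * n * (jlQ α β n).coeff 0 := by
  have h := congrArg (fun p => coeff p 1) (jlE_Q α β n)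
  simp only [jl_E_form] at h
  have hx : ∀ p : ℝ[X], (X * p).coeff 1 = p.coeff 0 := fun p => coeff_X_mul p 0
  rw [coeff_add, coeff_sub, coeff_add, jl_coeff_theta, jl_coeff_theta, coeff_C_mul, jl_coeff_theta, hx, hx,
    coeff_X_mul_zero, coeff_C_mul, coeff_sub, coeff_C_mul, jl_coeff_theta] at h
  simp at h
  linear_combination -h

theorem jl_rec2 (α β : ℝ) (n k : ℕ) :
    ((k:ℝ)+2) * (2 * (n:ℝ) - (k+2) + (α+β+1)) * (jlQ α β n).coeff (k+2) =
      2 * (α - β) * (n - k - 1) * (jlQ α β n).coeff (k+1)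
      + (2 * n - k) * (k + (α+β+1)) * (jlQ α β n).coeff k := by
  have h := congrArg (fun p => coeff p (k+1+1)) (jlE_Q α β n)
  simp only [jl_E_form] at h
  rw [coeff_add, coeff_sub, coeff_X_mul _ (k+1), coeff_X_mul _ k, coeff_X_mul _ (k+1)] at h
  simp only [coeff_add, coeff_sub, jl_coeff_theta, coeff_C_mul, coeff_zero] at h
  push_cast at h
  linear_combination -h

theorem jl_natDegree_T (n k : ℕ) (hk : k ≤ n) : (jlT n k).natDegree ≤ 2 * n := by
  unfold jlT
  have h1 : (1 - X : ℝ[X]).natDegree ≤ 1 := by compute_degree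
  have h2 : (1 + X : ℝ[X]).natDegree ≤ 1 := by compute_degree
  have h3 := natDegree_pow_le_of_le (2*k) h1
  have h4 := natDegree_pow_le_of_le (2*(n-k)) h2
  have := natDegree_mul_le_of_le h3 h4
  omega

theorem jl_natDegree (α β : ℝ) (n : ℕ) : (jlQ α β n).natDegree ≤ 2 * n := by
  unfold jlQ
  refine natDegree_sum_le_of_forall_le _ _ fun k hk => ?_
  exact (natDegree_C_mul_le _ _).trans (jl_natDegree_T n k (by have := Finset.mem_range.1 hk; omega))

theorem jl_reflect_pow (p : ℝ[X]) (hd : p.natDegree ≤ 2) (hp : reflect 2 p = p) (k : ℕ) :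
    reflect (2*k) (p^k) = p^k := by
  induction k with
  | zero => simp 
  | succ k ih =>
    have := natDegree_pow_le_of_le k hd
    rw [pow_succ, mul_add, mul_one, reflect_mul _ _ (by omega) hd, ih, hp]

theorem jl_reflect_T (n k : ℕ) (hk : k ≤ n) : reflect (2*n) (jlT n k) = jlT n k := by
  have d1 : ((1 - X : ℝ[X])^2).natDegree ≤ 2 := by compute_degree
  have d2 : ((1 + X : ℝ[X])^2).natDegree ≤ 2 := by compute_degree
  have r1 : reflect 2 ((1 - X : ℝ[X])^2) = (1-X)^2 := by
    rw [show (1 - X : ℝ[X])^2 = C 1 * X^0 + C (-2) * X^1 + C 1 * X^2 by simp only [map_one, map_neg, map_ofNat]; ring]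
    simp only [reflect_add, reflect_C_mul_X_pow, revAt_le (show 0 ≤ 2 by norm_num), revAt_le (show 1 ≤ 2 by norm_num), revAt_le (show 2 ≤ 2 by norm_num)]
    simp only [map_one, map_neg, map_ofNat, Nat.sub_zero, Nat.sub_self]; ring
  have r2 : reflect 2 ((1 + X : ℝ[X])^2) = (1+X)^2 := by
    rw [show (1 + X : ℝ[X])^2 = C 1 * X^0 + C (2) * X^1 + C 1 * X^2 by simp only [map_one, map_ofNat]; ring]
    simp only [reflect_add, reflect_C_mul_X_pow, revAt_le (show 0 ≤ 2 by norm_num), revAt_le (show 1 ≤ 2 by norm_num), revAt_le (show 2 ≤ 2 by norm_num)]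
    simp only [map_one, map_neg, map_ofNat, Nat.sub_zero, Nat.sub_self]; ring
  unfold jlT
  have h3 := natDegree_pow_le_of_le k d1
  have h4 := natDegree_pow_le_of_le (n-k) d2
  rw [pow_mul, pow_mul, show 2 * n = 2 * k + 2 * (n-k) by omega,
    reflect_mul _ _ (by omega) (by omega), jl_reflect_pow _ d1 r1, jl_reflect_pow _ d2 r2]

theorem jl_symm (α β : ℝ) (n k : ℕ) (hk : k ≤ 2 * n) :
    (jlQ α β n).coeff (2*n-k) = (jlQ α β n).coeff k := by
  unfold jlQ
  rw [finsetSum_coeff, finsetSum_coeff]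
  refine Finset.sum_congr rfl fun j hj => ?_
  rw [coeff_C_mul, coeff_C_mul]
  congr 1
  conv_rhs => rw [← jl_reflect_T n j (by have := Finset.mem_range.1 hj; omega), coeff_reflect, revAt_le hk]

theorem jl_coeff_zero (α β : ℝ) (n : ℕ) : (jlQ α β n).coeff 0 = gbinom (2 * n + α + β) n := by
  rw [← jl_vander, jlQ, finsetSum_coeff]
  refine Finset.sum_congr rfl fun j hj => ?_
  simp [jlT, coeff_zero_eq_eval_zero]

theorem jl_eval (α β : ℝ) (n : ℕ) (u : ℂ) (hu : u ≠ 0) :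
    jacobiC α β n ((u + u⁻¹) / 2) = u^n * (∑' k, (((jlQ α β n).coeff k / 4^n : ℝ) : ℂ) * u⁻¹^k) := by
  have h1 : aeval u⁻¹ (jlQ α β n) = ∑' k, (((jlQ α β n).coeff k : ℝ) : ℂ) * u⁻¹^k := by
    rw [aeval_eq_sum_range' (Nat.lt_succ_of_le (jl_natDegree α β n)), tsum_eq_sum]
    · refine Finset.sum_congr rfl fun k _ => ?_
      simp
    · intro k hk
      rw [coeff_eq_zero_of_natDegree_lt]
      · simp
      · have := jl_natDegree α β n
        simp at hk; omega
  have h2 : (∑' k, (((jlQ α β n).coeff k / 4^n : ℝ) : ℂ) * u⁻¹^k) = aeval u⁻¹ (jlQ α β n) / 4^n := by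
    rw [h1, ← tsum_div_const]
    congr 1; ext k; push_cast; ring
  rw [h2, jacobiC, jlQ, map_sum, Finset.sum_div, Finset.mul_sum, Finset.mul_sum]
  refine Finset.sum_congr rfl fun k hk => ?_
  have hk' : k ≤ n := by have := Finset.mem_range.1 hk; omega
  obtain ⟨m, rfl⟩ := Nat.exists_eq_add_of_le hk'
  rw [show (u + u⁻¹)/2 - 1 = u * (1 - u⁻¹)^2 / 2 by field_simp; ring,
    show (u + u⁻¹)/2 + 1 = u * (1 + u⁻¹)^2 / 2 by field_simp; ring]
  simp only [jlT, map_mul, map_pow, map_sub, map_add, map_one, aeval_X, aeval_C, jlG, Nat.add_sub_cancel_left, div_pow, mul_pow, pow_add, pow_mul, show (4:ℂ) = 2 * 2 by norm_num, Complex.coe_algebraMap, Complex.ofReal_mul]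
  field_simp

end jlpoly

/-- limiting Taylor coefficients -/
noncomputable def jlSeq (D s : ℝ) : ℕ → ℝ
  | 0 => 1
  | 1 => D
  | (k+2) => (D * jlSeq D s (k+1) + (k+s) * jlSeq D s k) / (k+2)

theorem jl_ratio (a b : ℝ) :
    Filter.Tendsto (fun n : ℕ => (2 * (n:ℝ) + a) / (2 * n + b)) Filter.atTop (nhds 1) := by
  have a1 : ∀ c : ℝ, Filter.Tendsto (fun n : ℕ => (c / (n:ℝ))) Filter.atTop (nhds 0) :=
    fun c => tendsto_const_div_atTop_nhds_zero_nat c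
  have := ((a1 a).const_add 2).div ((a1 b).const_add 2) (by norm_num)
  simp only [add_zero] at this
  rw [div_self (by norm_num)] at this
  refine this.congr' ?_
  filter_upwards [Filter.eventually_gt_atTop 0] with n hn
  have hn' : (0:ℝ) < n := by exact_mod_cast hn
  simp only [Pi.div_apply]
  rw [← mul_div_mul_left _ _ hn'.ne']
  congr 1 <;> field_simp

theorem jl_conv (D s : ℝ) (y : ℕ → ℕ → ℝ)
    (h0 : Filter.Tendsto (fun n => y n 0) Filter.atTop (nhds 1))
    (h1 : ∀ n : ℕ, (2 * (n:ℝ) - 1 + s) * y n 1 = 2 * D * n * y n 0)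
    (h2 : ∀ n k : ℕ, ((k:ℝ)+2) * (2 * (n:ℝ) - (k+2) + s) * y n (k+2) =
      2 * D * (n - k - 1) * y n (k+1) + (2 * n - k) * (k + s) * y n k) (k : ℕ) :
    Filter.Tendsto (fun n => y n k) Filter.atTop (nhds (jlSeq D s k)) ∧
    Filter.Tendsto (fun n => y n (k+1)) Filter.atTop (nhds (jlSeq D s (k+1))) := by
  have hev : ∀ c : ℝ, ∀ᶠ n : ℕ in Filter.atTop, 2 * (n:ℝ) + c ≠ 0 := by
    intro c
    filter_upwards [tendsto_natCast_atTop_atTop.eventually_gt_atTop (-c/2)] with n hn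
    have : (-c/2:ℝ) < n := hn
    have : 0 < 2 * (n:ℝ) + c := by linarith
    exact this.ne'
  induction k with
  | zero =>
    refine ⟨h0, ?_⟩
    have := ((jl_ratio 0 (-1 + s)).mul h0).const_mul D
    simp only [mul_one] at this
    refine this.congr' ?_
    filter_upwards [hev (-1+s)] with n hn
    have := h1 n
    field_simp
    linear_combination -this
  | succ k ih =>
    refine ⟨ih.2, ?_⟩
    have t1 := ((jl_ratio (2 * (-k-1)) (-(k+2) + s)).mul ih.2).const_mul D
    have t2 := ((jl_ratio (-k) (-(k+2) + s)).mul ih.1).const_mul (k+s)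
    have t := (t1.add t2).div_const ((k:ℝ)+2)
    simp only [one_mul] at t
    show Filter.Tendsto _ _ (nhds ((D * jlSeq D s (k+1) + (k+s) * jlSeq D s k) / (k+2)))
    refine t.congr' ?_
    filter_upwards [hev (-(k+2)+s)] with n hn
    have := h2 n k
    have hk : (k:ℝ) + 2 ≠ 0 := by positivity
    show _ = y n (k+2)
    field_simp
    linear_combination -this

theorem jl_bound (D s : ℝ) (hs : -1 < s) (y : ℕ → ℕ → ℝ)
    (h0 : Filter.Tendsto (fun n => y n 0) Filter.atTop (nhds 1))
    (h1 : ∀ n : ℕ, (2 * (n:ℝ) - 1 + s) * y n 1 = 2 * D * n * y n 0)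
    (h2 : ∀ n k : ℕ, ((k:ℝ)+2) * (2 * (n:ℝ) - (k+2) + s) * y n (k+2) =
      2 * D * (n - k - 1) * y n (k+1) + (2 * n - k) * (k + s) * y n k)
    (hsymm : ∀ n k : ℕ, k ≤ 2 * n → y n (2*n-k) = y n k)
    (hdeg : ∀ n k : ℕ, 2 * n < k → y n k = 0)
    (ε : ℝ) (hε : 0 < ε) :
    ∃ M : ℝ, ∀ᶠ n in Filter.atTop, ∀ k, |y n k| ≤ M * (1+2*ε)^k := by
  obtain ⟨K, hK⟩ := exists_nat_gt ((2 * |D| + |s|) / ε)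
  rw [div_lt_iff₀ hε] at hK
  refine ⟨1 + ∑ k ∈ Finset.range (K+2), |jlSeq D s k|, ?_⟩
  set M := 1 + ∑ k ∈ Finset.range (K+2), |jlSeq D s k| with hM
  have hM0 : 0 < M := by positivity
  have hR : 1 ≤ 1 + 2 * ε := by linarith
  have hsmall : ∀ᶠ n in Filter.atTop, ∀ k ∈ Finset.range (K+2), |y n k| < M := by
    rw [Filter.eventually_all_finset]
    intro k hk
    refine (jl_conv D s y h0 h1 h2 k).1.abs.eventually_lt_const ?_
    have := Finset.single_le_sum (f := fun k => |jlSeq D s k|) (fun i _ => abs_nonneg _) hk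
    linarith
  filter_upwards [hsmall, Filter.eventually_ge_atTop 2,
    tendsto_natCast_atTop_atTop.eventually_gt_atTop (1 + 3 / ε)] with n hn hn2 hn3
  have hn3' : 1 + 3 / ε < (n:ℝ) := hn3
  have hn2' : (2:ℝ) ≤ n := by exact_mod_cast hn2
  have hn4 : 3 ≤ ε * (n - 1) := by
    have : 3 / ε < (n:ℝ) - 1 := by linarith
    rw [div_lt_iff₀ hε] at this
    linarith
  have key : ∀ k, k + 1 ≤ n → |y n k| ≤ M * (1+2*ε)^k ∧ |y n (k+1)| ≤ M * (1+2*ε)^(k+1) := by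
    have hlow : ∀ k, k < K + 2 → |y n k| ≤ M * (1+2*ε)^k := by
      intro k hk
      have a := (hn k (Finset.mem_range.2 hk)).le
      have b : 1 ≤ (1+2*ε)^k := one_le_pow₀ hR
      nlinarith
    intro k
    induction k with
    | zero => exact fun _ => ⟨hlow 0 (by omega), hlow 1 (by omega)⟩
    | succ k ih =>
      intro hk
      obtain ⟨i1, i2⟩ := ih (by omega)
      refine ⟨i2, ?_⟩
      rcases lt_or_ge (k+1+1) (K+2) with hc | hc
      · exact hlow _ hc
      have hkK : (K:ℝ) ≤ k := by exact_mod_cast (by omega : K ≤ k)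
      have hkn : (k:ℝ) + 2 ≤ n := by exact_mod_cast hk
      have hk0 : (0:ℝ) ≤ k := by positivity
      set d : ℝ := 2 * n - (k+2) + s with hd
      have hd0 : (n:ℝ) - 1 < d := by rw [hd]; linarith
      have hdpos : 0 < d := by linarith
      have hKε : 2 * |D| + |s| ≤ ε * (k+2) := by nlinarith
      have hrec := h2 n k
      have c1 : |2 * D * (n - k - 1)| ≤ ε * ((k+2) * d) := by
        rw [abs_mul, abs_mul, abs_of_nonneg (show (0:ℝ) ≤ 2 by norm_num),
          abs_of_nonneg (show (0:ℝ) ≤ n - k - 1 by linarith)]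
        have e1 : 2 * |D| ≤ ε * (k+2) := by linarith [abs_nonneg s]
        have e2 : (n:ℝ) - k - 1 ≤ d := by rw [hd]; linarith
        calc 2 * |D| * ((n:ℝ)-k-1) ≤ (ε * (k+2)) * d :=
              mul_le_mul e1 e2 (by linarith) (by positivity)
          _ = _ := by ring
      have c2 : |(2 * (n:ℝ) - k) * (k + s)| ≤ (1+ε)^2 * ((k+2) * d) := by
        rw [abs_mul, abs_of_nonneg (show (0:ℝ) ≤ 2 * n - k by linarith)]
        have e1 : |(k:ℝ) + s| ≤ (1+ε) * (k+2) := by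
          have := abs_add_le (k:ℝ) s
          rw [abs_of_nonneg hk0] at this
          nlinarith [abs_nonneg D]
        have e2 : 2 * (n:ℝ) - k ≤ (1+ε) * d := by
          have : ε * (n-1) ≤ ε * d := by nlinarith
          rw [hd] at *
          linarith
        calc (2 * (n:ℝ) - k) * |(k:ℝ)+s| ≤ ((1+ε) * d) * ((1+ε) * (k+2)) :=
              mul_le_mul e2 e1 (abs_nonneg _) (by positivity)
          _ = _ := by ring
      have hX : 0 < ((k:ℝ)+2) * d := by positivity
      have h3 : ((k:ℝ)+2) * d * |y n (k+2)| ≤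
          ((k:ℝ)+2) * d * (ε * |y n (k+1)| + (1+ε)^2 * |y n k|) := by
        calc ((k:ℝ)+2) * d * |y n (k+2)| = |((k:ℝ)+2) * d * y n (k+2)| := by
              rw [abs_mul _ (y n (k+2)), abs_of_pos hX]
          _ = |2 * D * (n - k - 1) * y n (k+1) + (2 * n - k) * (k + s) * y n k| := by rw [hrec]
          _ ≤ |2 * D * (n - k - 1)| * |y n (k+1)| + |(2 * n - k) * (k + s)| * |y n k| := by
              rw [← abs_mul, ← abs_mul]; exact abs_add_le _ _
          _ ≤ (ε * ((k+2) * d)) * |y n (k+1)| + ((1+ε)^2 * ((k+2) * d)) * |y n k| := by gcongr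
          _ = _ := by ring
      have h4 := le_of_mul_le_mul_left h3 hX
      show |y n (k+2)| ≤ _
      calc |y n (k+2)| ≤ ε * (M * (1+2*ε)^(k+1)) + (1+ε)^2 * (M * (1+2*ε)^k) := by
            refine h4.trans ?_; gcongr
        _ = (ε * (1+2*ε) + (1+ε)^2) * (M * (1+2*ε)^k) := by ring
        _ ≤ (1+2*ε)^2 * (M * (1+2*ε)^k) := by
            gcongr; nlinarith
        _ = _ := by ring
  have key2 : ∀ k, k ≤ n → |y n k| ≤ M * (1+2*ε)^k := by
    intro k hk
    rcases k with _ | k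
    · exact (key 0 (by omega)).1
    · exact (key k hk).2
  intro k
  rcases le_or_gt k n with hk | hk
  · exact key2 k hk
  rcases le_or_gt k (2*n) with hk2 | hk2
  · rw [← hsymm n k hk2]
    refine (key2 _ (by omega)).trans ?_
    gcongr
    omega
  · rw [hdeg n k hk2]; simp; positivity

theorem jl_ode (A B : ℝ) (e : ℕ → ℝ) (he0 : e 0 = 1) (he1 : e 1 = A - B)
    (he2 : ∀ k : ℕ, ((k:ℝ)+2) * e (k+2) = (A - B) * e (k+1) + (k+(A+B)) * e k) (z : ℂ)
    (hs : Summable (fun k : ℕ => (e k : ℂ) * z^k))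
    (hs' : Summable (fun k : ℕ => (e k : ℂ) * (k * z^(k-1)))) :
    (1 - z^2) * (∑' k : ℕ, (e k : ℂ) * (k * z^(k-1))) =
      ((A:ℂ) - B + (A+B) * z) * (∑' k : ℕ, (e k : ℂ) * z^k) := by
  have S := hs.hasSum
  have S' := hs'.hasSum
  generalize (∑' k : ℕ, (e k : ℂ) * z^k) = g at *
  generalize (∑' k : ℕ, (e k : ℂ) * (k * z^(k-1))) = g' at *
  have T1 : HasSum (fun k : ℕ => (e (k+1) : ℂ) * z^(k+1)) (g - 1) := by
    have := (hasSum_nat_add_iff' 1).2 S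
    simpa [he0] using this
  have T2 : HasSum (fun k : ℕ => (e (k+2) : ℂ) * (((k+2:ℕ):ℂ) * z^(k+1))) (g' - (A - B)) := by
    have := (hasSum_nat_add_iff' 2).2 S'
    simpa [Finset.sum_range_succ, he1] using this
  have T3 : HasSum (fun k : ℕ => (e k : ℂ) * (k * z^k)) (z * g') := by
    have h := S'.mul_left z
    have e1 : (fun k : ℕ => z * ((e k : ℂ) * (k * z^(k-1)))) = fun k : ℕ => (e k : ℂ) * (k * z^k) := by
      funext k
      rcases k with _ | k
      · simp
      · rw [Nat.add_sub_cancel, pow_succ]; ring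
    rwa [e1] at h
  have T4 := ((T1.mul_left ((A:ℂ) - B)).add (S.mul_left (((A:ℂ)+B) * z))).add (T3.mul_left z)
  have e2 : (fun k : ℕ => ((A:ℂ) - B) * ((e (k+1) : ℂ) * z^(k+1)) + ((A:ℂ)+B) * z * ((e k : ℂ) * z^k)
      + z * ((e k : ℂ) * (k * z^k))) = (fun k : ℕ => (e (k+2) : ℂ) * (((k+2:ℕ):ℂ) * z^(k+1))) := by
    funext k
    have h := congrArg (fun x : ℝ => (x:ℂ)) (he2 k)
    push_cast at h ⊢
    linear_combination (-z^(k+1)) * h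
  rw [e2] at T4
  have := T2.unique T4
  linear_combination this

theorem jl_function (A B : ℝ) (e : ℕ → ℝ) (he0 : e 0 = 1) (he1 : e 1 = A - B)
    (he2 : ∀ k : ℕ, ((k:ℝ)+2) * e (k+2) = (A - B) * e (k+1) + (k+(A+B)) * e k)
    (hb : ∀ ε : ℝ, 0 < ε → ∃ M : ℝ, ∀ k, |e k| ≤ M * (1+2*ε)^k) (v : ℂ) (hv : ‖v‖ < 1) :
    ∑' k, (e k : ℂ) * v^k = (1 - v)^(-(A:ℂ)) * (1+v)^(-(B:ℂ)) := by
  obtain ⟨r, hr1, hr2⟩ := exists_between hv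
  have hr0 : 0 < r := (norm_nonneg v).trans_lt hr1
  obtain ⟨ε, hε, hεr⟩ : ∃ ε : ℝ, 0 < ε ∧ (1+2*ε) * r < 1 :=
    ⟨(1 - r)/(4*r), by have : 0 < 1 - r := by linarith
                       positivity, by field_simp; linarith⟩
  obtain ⟨M, hM⟩ := hb ε hε
  have hM0 : 0 ≤ M := by have := hM 0; simp at this; exact (abs_nonneg _).trans this
  obtain ⟨q, hq⟩ : ∃ q : ℝ, q = (1+2*ε) * r := ⟨_, rfl⟩
  rw [← hq] at hεr
  have hq0 : 0 ≤ q := by rw [hq]; positivity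
  have hqn : ‖q‖ < 1 := by rwa [Real.norm_of_nonneg hq0]
  have sum1 : Summable (fun k : ℕ => M / r * ((k:ℝ)^1 * q^k)) :=
    (summable_pow_mul_geometric_of_norm_lt_one 1 hqn).mul_left _
  have sum0 : Summable (fun k : ℕ => M * q^k) :=
    (summable_geometric_of_lt_one hq0 hεr).mul_left _
  have bd0 : ∀ (k : ℕ) (z : ℂ), z ∈ Metric.ball (0:ℂ) r → ‖(e k : ℂ) * z^k‖ ≤ M * q^k := by
    intro k z hz
    have hz' : ‖z‖ < r := by simpa using hz
    rw [norm_mul, norm_pow, Complex.norm_real, Real.norm_eq_abs, hq, mul_pow, ← mul_assoc]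
    gcongr
    exact hM k
  have bd1 : ∀ (k : ℕ) (z : ℂ), z ∈ Metric.ball (0:ℂ) r →
      ‖(e k : ℂ) * (k * z^(k-1))‖ ≤ M / r * ((k:ℝ)^1 * q^k) := by
    intro k z hz
    have hz' : ‖z‖ < r := by simpa using hz
    rcases k with _ | k
    · simp
    rw [norm_mul, norm_mul, norm_pow, Complex.norm_real, Real.norm_eq_abs, Complex.norm_natCast, hq, mul_pow,
      Nat.add_sub_cancel]
    calc |e (k+1)| * (((k+1:ℕ):ℝ) * ‖z‖^k) ≤ (M * (1+2*ε)^(k+1)) * (((k+1:ℕ):ℝ) * r^k) := by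
          gcongr
          exact hM _
      _ = _ := by field_simp; ring
  have hsum : ∀ z : ℂ, z ∈ Metric.ball (0:ℂ) r → Summable (fun k : ℕ => (e k : ℂ) * z^k) :=
    fun z hz => Summable.of_norm_bounded sum0 (fun k => bd0 k z hz)
  have hsum' : ∀ z : ℂ, z ∈ Metric.ball (0:ℂ) r → Summable (fun k : ℕ => (e k : ℂ) * (k * z^(k-1))) :=
    fun z hz => Summable.of_norm_bounded sum1 (fun k => bd1 k z hz)
  set g : ℂ → ℂ := fun z => ∑' k, (e k : ℂ) * z^k with hg
  set g' : ℂ → ℂ := fun z => ∑' k : ℕ, (e k : ℂ) * (k * z^(k-1)) with hg'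
  have hzero : (0:ℂ) ∈ Metric.ball (0:ℂ) r := Metric.mem_ball_self hr0
  have hder : ∀ z : ℂ, z ∈ Metric.ball (0:ℂ) r → HasDerivAt g (g' z) z := by
    intro z hz
    exact hasDerivAt_tsum_of_isPreconnected sum1 Metric.isOpen_ball
      (convex_ball (0:ℂ) r).isPreconnected
      (fun n y _ => (hasDerivAt_pow n y).const_mul _) bd1 hzero (hsum 0 hzero) hz
  have hode : ∀ z : ℂ, z ∈ Metric.ball (0:ℂ) r →
      (1 - z^2) * g' z = ((A:ℂ) - B + (A+B) * z) * g z := by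
    intro z hz
    exact jl_ode A B e he0 he1 he2 z (hsum z hz) (hsum' z hz)
  have hslit1 : ∀ z : ℂ, z ∈ Metric.ball (0:ℂ) r → 1 - z ∈ Complex.slitPlane := by
    intro z hz
    have hz' : ‖z‖ < r := by simpa using hz
    left
    have := Complex.re_le_norm z
    simp; linarith
  have hslit2 : ∀ z : ℂ, z ∈ Metric.ball (0:ℂ) r → 1 + z ∈ Complex.slitPlane := by
    intro z hz
    have hz' : ‖z‖ < r := by simpa using hz
    left
    have := (abs_le.1 (Complex.abs_re_le_norm z)).1
    simp; linarith
  have hconst : ∀ z : ℂ, z ∈ Metric.ball (0:ℂ) r →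
      HasDerivAt (fun z => g z * ((1 - z)^(A:ℂ) * (1+z)^(B:ℂ))) 0 z := by
    intro z hz
    have n1 := Complex.slitPlane_ne_zero (hslit1 z hz)
    have n2 := Complex.slitPlane_ne_zero (hslit2 z hz)
    have d1 : HasDerivAt (fun z : ℂ => (1-z)^(A:ℂ)) _ z :=
      ((hasDerivAt_id z).const_sub 1).cpow_const (c := (A:ℂ)) (hslit1 z hz)
    have d2 : HasDerivAt (fun z : ℂ => (1+z)^(B:ℂ)) _ z :=
      ((hasDerivAt_id z).const_add 1).cpow_const (c := (B:ℂ)) (hslit2 z hz)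
    have d := (hder z hz).mul (d1.mul d2)
    convert! d using 1
    simp only [id, Pi.mul_apply]
    rw [Complex.cpow_sub _ _ n1, Complex.cpow_sub _ _ n2, Complex.cpow_one, Complex.cpow_one]
    have o := hode z hz
    field_simp
    linear_combination (-((1 - z)^(A:ℂ) * (1+z)^(B:ℂ))) * o
  have hvb : v ∈ Metric.ball (0:ℂ) r := by simpa using hr1
  have hfin := Metric.isOpen_ball.is_const_of_deriv_eq_zero (convex_ball (0:ℂ) r).isPreconnected
    (fun z hz => (hconst z hz).differentiableAt.differentiableWithinAt)
    (fun z hz => (hconst z hz).deriv) hvb hzero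
  have hg0 : g 0 = 1 := by
    simp only [hg]
    rw [tsum_eq_single 0]
    · simp [he0]
    · intro k hk; simp [hk]
  have n1 := Complex.slitPlane_ne_zero (hslit1 v hvb)
  have n2 := Complex.slitPlane_ne_zero (hslit2 v hvb)
  simp only [hg0, sub_zero, add_zero, Complex.one_cpow, mul_one] at hfin
  show g v = _
  rw [Complex.cpow_neg, Complex.cpow_neg, ← mul_inv]
  refine eq_inv_of_mul_eq_one_left hfin

theorem jl_main (A B : ℝ) (hs : -1 < A + B) (y : ℕ → ℕ → ℝ)
    (h0 : Filter.Tendsto (fun n => y n 0) Filter.atTop (nhds 1))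
    (h1 : ∀ n : ℕ, (2 * (n:ℝ) - 1 + (A+B)) * y n 1 = 2 * (A-B) * n * y n 0)
    (h2 : ∀ n k : ℕ, ((k:ℝ)+2) * (2 * (n:ℝ) - (k+2) + (A+B)) * y n (k+2) =
      2 * (A-B) * (n - k - 1) * y n (k+1) + (2 * n - k) * (k + (A+B)) * y n k)
    (hsymm : ∀ n k : ℕ, k ≤ 2 * n → y n (2*n-k) = y n k)
    (hdeg : ∀ n k : ℕ, 2 * n < k → y n k = 0) (v : ℂ) (hv : ‖v‖ < 1) :
    Filter.Tendsto (fun n => ∑' k, (y n k : ℂ) * v^k) Filter.atTop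
      (nhds ((1 - v)^(-(A:ℂ)) * (1+v)^(-(B:ℂ)))) := by
  have hconv := fun k => (jl_conv (A-B) (A+B) y h0 h1 h2 k).1
  have hbd := jl_bound (A-B) (A+B) hs y h0 h1 h2 hsymm hdeg
  rw [← jl_function A B (jlSeq (A-B) (A+B)) rfl rfl _ _ v hv]
  · obtain ⟨ε, hε, hεr⟩ : ∃ ε : ℝ, 0 < ε ∧ (1+2*ε) * ‖v‖ < 1 := by
      have hp : 0 < 1 - ‖v‖ := by linarith
      refine ⟨(1 - ‖v‖)/4, by positivity, ?_⟩
      nlinarith [norm_nonneg v]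
    obtain ⟨M, hM⟩ := hbd ε hε
    refine tendsto_tsum_of_dominated_convergence (bound := fun k => M * ((1+2*ε) * ‖v‖)^k) ?_ ?_ ?_
    · exact (summable_geometric_of_lt_one (by positivity) hεr).mul_left _
    · intro k
      exact ((Complex.continuous_ofReal.tendsto _).comp (hconv k)).mul_const _
    · filter_upwards [hM] with n hn k
      rw [norm_mul, norm_pow, Complex.norm_real, Real.norm_eq_abs, mul_pow, ← mul_assoc]
      gcongr
      exact hn k
  · intro k
    have : jlSeq (A-B) (A+B) (k+2) =
      ((A-B) * jlSeq (A-B) (A+B) (k+1) + (k+(A+B)) * jlSeq (A-B) (A+B) k) / (k+2) := rfl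
    rw [this]
    have : (k:ℝ)+2 ≠ 0 := by positivity
    field_simp
  · intro ε hε
    obtain ⟨M, hM⟩ := hbd ε hε
    refine ⟨M, fun k => ?_⟩
    refine le_of_tendsto (hconv k).abs ?_
    filter_upwards [hM] with n hn using hn k

/-- for `α, β > -1` and `|u| = ρ > 1` with `z = (u + u⁻¹)/2`,
`√(nπ) P_n^{(α,β)}(z) / (2^{α+β} u^n) → (1 - u⁻¹)^{-α-1/2} (1 + u⁻¹)^{-β-1/2}` as `n → ∞`,
complex powers being principal. -/
theorem jacobi_limit_on_bernstein_ellipse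
    (α β : ℝ) (hα : -1 < α) (hβ : -1 < β) (ρ : ℝ) (hρ : 1 < ρ)
    (u : ℂ) (hu : ‖u‖ = ρ) :
    Filter.Tendsto
      (fun n : ℕ => ((Real.sqrt (n * Real.pi) : ℝ) : ℂ) * jacobiC α β n ((u + u⁻¹) / 2) /
        ((2 : ℂ) ^ ((α : ℂ) + (β : ℂ)) * u ^ n))
      Filter.atTop
      (nhds ((1 - u⁻¹) ^ (-(α : ℂ) - 1/2) * (1 + u⁻¹) ^ (-(β : ℂ) - 1/2))) := by
  have hu0 : u ≠ 0 := by
    intro h; rw [h, norm_zero] at hu; linarith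
  have hv : ‖u⁻¹‖ < 1 := by
    rw [norm_inv, hu]; exact inv_lt_one_of_one_lt₀ hρ
  have h2pos : (0:ℝ) < (2:ℝ)^(α+β) := by positivity
  obtain ⟨l, hl⟩ : ∃ l : ℕ → ℝ, l = fun n : ℕ => Real.sqrt (n * Real.pi) / 4^n / (2:ℝ)^(α+β) := ⟨_, rfl⟩
  have eD : (α + 1/2) - (β + 1/2) = α - β := by ring
  have es : (α + 1/2) + (β + 1/2) = α + β + 1 := by ring
  have key := jl_main (α + 1/2) (β + 1/2) (by linarith) (fun n k => l n * (jlQ α β n).coeff k)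
    (by
      have := (jl_c0 α β hα hβ).div_const ((2:ℝ)^(α+β))
      rw [div_self h2pos.ne'] at this
      refine this.congr fun n => ?_
      rw [jl_coeff_zero, hl]
      ring)
    (by
      intro n
      have := jl_rec1 α β n
      rw [eD, es]
      linear_combination (l n) * this)
    (by
      intro n k
      have := jl_rec2 α β n k
      rw [eD, es]
      linear_combination (l n) * this)
    (by
      intro n k hk
      simp only [jl_symm α β n k hk])
    (by
      intro n k hk
      have := jl_natDegree α β n
      rw [Polynomial.coeff_eq_zero_of_natDegree_lt (by omega), mul_zero])
    u⁻¹ hv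
  have e1 : (-(α : ℂ) - 1/2) = -((α + 1/2 : ℝ) : ℂ) := by push_cast; ring
  have e2 : (-(β : ℂ) - 1/2) = -((β + 1/2 : ℝ) : ℂ) := by push_cast; ring
  rw [e1, e2]
  refine key.congr fun n => ?_
  have hc : (2:ℂ)^((α:ℂ)+(β:ℂ)) = (((2:ℝ)^(α+β) : ℝ) : ℂ) := by
    rw [Complex.ofReal_cpow (by norm_num)]; push_cast; rfl
  have hcne : (((2:ℝ)^(α+β) : ℝ) : ℂ) ≠ 0 := by exact_mod_cast h2pos.ne'
  rw [jl_eval α β n u hu0, hc]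
  have hun : u^n ≠ 0 := pow_ne_zero _ hu0
  have : ((Real.sqrt (n * Real.pi) : ℝ) : ℂ) * (u^n * ∑' k, (((jlQ α β n).coeff k / 4^n : ℝ) : ℂ) * u⁻¹^k) /
      ((((2:ℝ)^(α+β) : ℝ) : ℂ) * u^n) = (((Real.sqrt (n * Real.pi) : ℝ) : ℂ) / (((2:ℝ)^(α+β) : ℝ) : ℂ)) *
        ∑' k, (((jlQ α β n).coeff k / 4^n : ℝ) : ℂ) * u⁻¹^k := by
    generalize (((2:ℝ)^(α+β) : ℝ) : ℂ) = c at *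
    field_simp
  rw [this, ← tsum_mul_left]
  refine tsum_congr fun k => ?_
  rw [hl]
  simp only [Complex.ofReal_mul, Complex.ofReal_div]
  ring
end
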